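/- arXiv:1301.7215 — 3 statements merged into one kernel-verified Lean document; each statement's English description precedes it below -/
import Mathlib

section
/- Let n ≥ 2 and 0 ≤ k ≤ n−1. For every polynomial f ∈ MvPolynomial (Fin n × Fin n) ℂ, if f vanishes at every orthogonally diagonalizable symmetric matrix A ∈ Matrix (Fin n) (Fin n) ℂ that is k-degenerate, then f vanishes at every k-degenerate symmetric matrix A ∈ Matrix (Fin n) (Fin n) ℂ. (I.e., the orthogonally diagonalizable matrices form a Zariski dense subset of the variety of k-degenerate complex symmetric n×n matrices.) -/
open Matrix

open Polynomial in
/-- The deformed polynomial: every root `c` of multiplicity `m` is replaced by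
`c, c + t, …, c + (m-1) t`. -/
noncomputable def defPoly (P : ℂ[X]) (t : ℂ) : ℂ[X] :=
  ∏ c ∈ P.roots.toFinset, ∏ l ∈ Finset.range (P.rootMultiplicity c), (X - C (c + t * l))

/-- Existence of a good deformation of a self-adjoint operator. -/
def GoodDef (P : Polynomial ℂ) {V : Type*} [AddCommGroup V] [Module ℂ V]
    (b : V →ₗ[ℂ] V →ₗ[ℂ] ℂ) (A : Module.End ℂ V) : Prop :=
  ∃ (D : Module.End ℂ V) (B : ℂ → (V →ₗ[ℂ] V →ₗ[ℂ] ℂ)),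
    (∀ x y, Continuous fun t => B t x y) ∧ B 0 = b ∧ (∀ t x y, B t x y = B t y x) ∧
    (∀ t x y, B t ((A + t • D) x) y = B t x ((A + t • D) y)) ∧
    ∀ t, Polynomial.aeval (A + t • D) (defPoly P t) = 0

theorem aeval_intertwine {U V : Type*} [AddCommGroup V] [Module ℂ V] [AddCommGroup U] [Module ℂ U]
    (L : U →ₗ[ℂ] V) (M : Module.End ℂ V) (N : Module.End ℂ U) (h : ∀ x, M (L x) = L (N x))
    (Q : Polynomial ℂ) (x : U) :
    Polynomial.aeval M Q (L x) = L (Polynomial.aeval N Q x) := by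
  induction Q using Polynomial.induction_on' generalizing x with
  | add p q hp hq => simp [hp, hq]
  | monomial n a =>
    have : ∀ n x, (M ^ n) (L x) = L ((N ^ n) x) := by
      intro n
      induction n with
      | zero => simp
      | succ n ih => intro x; rw [pow_succ, pow_succ, Module.End.mul_apply, Module.End.mul_apply, h, ih]
    simp [Polynomial.aeval_monomial, this, Module.algebraMap_end_apply]

theorem goodDef_glue (P : Polynomial ℂ) {V U W : Type*} [AddCommGroup V] [Module ℂ V]
    [AddCommGroup U] [Module ℂ U] [AddCommGroup W] [Module ℂ W]
    (i : U →ₗ[ℂ] V) (j : W →ₗ[ℂ] V) (p : V →ₗ[ℂ] U) (q : V →ₗ[ℂ] W)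
    (hpi : ∀ x, p (i x) = x) (hqj : ∀ x, q (j x) = x) (hpj : ∀ x, p (j x) = 0)
    (hqi : ∀ x, q (i x) = 0) (hsum : ∀ x, i (p x) + j (q x) = x)
    (b : V →ₗ[ℂ] V →ₗ[ℂ] ℂ) (A : Module.End ℂ V)
    (b₁ : U →ₗ[ℂ] U →ₗ[ℂ] ℂ) (A₁ : Module.End ℂ U)
    (b₂ : W →ₗ[ℂ] W →ₗ[ℂ] ℂ) (A₂ : Module.End ℂ W)
    (hb₁ : ∀ x y, b (i x) (i y) = b₁ x y) (hb₂ : ∀ x y, b (j x) (j y) = b₂ x y)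
    (hb₁₂ : ∀ x y, b (i x) (j y) = 0) (hb₂₁ : ∀ x y, b (j x) (i y) = 0)
    (hA₁ : ∀ x, A (i x) = i (A₁ x)) (hA₂ : ∀ x, A (j x) = j (A₂ x))
    (h₁ : GoodDef P b₁ A₁) (h₂ : GoodDef P b₂ A₂) : GoodDef P b A := by
  obtain ⟨D₁, B₁, hc₁, h0₁, hs₁, ha₁, hp₁⟩ := h₁
  obtain ⟨D₂, B₂, hc₂, h0₂, hs₂, ha₂, hp₂⟩ := h₂
  set D : Module.End ℂ V := i ∘ₗ D₁ ∘ₗ p + j ∘ₗ D₂ ∘ₗ q with hD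
  set B : ℂ → (V →ₗ[ℂ] V →ₗ[ℂ] ℂ) := fun t => (B₁ t).compl₁₂ p p + (B₂ t).compl₁₂ q q with hB
  have hBa : ∀ t x y, B t x y = B₁ t (p x) (p y) + B₂ t (q x) (q y) := by
    intro t x y; simp [hB]
  have hM₁ : ∀ (t : ℂ) x, (A + t • D) (i x) = i ((A₁ + t • D₁) x) := by
    intro t x; simp [hD, hA₁, hpi, hqi]
  have hM₂ : ∀ (t : ℂ) x, (A + t • D) (j x) = j ((A₂ + t • D₂) x) := by
    intro t x; simp [hD, hA₂, hpj, hqj]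
  have hpM : ∀ (t : ℂ) x, p ((A + t • D) x) = (A₁ + t • D₁) (p x) := by
    intro t x
    conv_lhs => rw [← hsum x]
    rw [map_add, hM₁, hM₂, map_add, hpi, hpj, add_zero]
  have hqM : ∀ (t : ℂ) x, q ((A + t • D) x) = (A₂ + t • D₂) (q x) := by
    intro t x
    conv_lhs => rw [← hsum x]
    rw [map_add, hM₁, hM₂, map_add, hqi, hqj, zero_add]
  refine ⟨D, B, ?_, ?_, ?_, ?_, ?_⟩
  · intro x y
    simp only [hBa]
    exact (hc₁ _ _).add (hc₂ _ _)
  · ext x y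
    rw [hBa, h0₁, h0₂]
    conv_rhs => rw [← hsum x, ← hsum y]
    simp [hb₁, hb₂, hb₁₂, hb₂₁]
  · intro t x y
    rw [hBa, hBa, hs₁, hs₂]
  · intro t x y
    rw [hBa, hBa, hpM, hpM, hqM, hqM, ha₁, ha₂]
  · intro t
    ext x
    rw [← hsum x, map_add, aeval_intertwine i _ _ (hM₁ t), aeval_intertwine j _ _ (hM₂ t), hp₁, hp₂]
    simp

theorem aeval_X_sub_C_apply {V : Type*} [AddCommGroup V] [Module ℂ V] (M : Module.End ℂ V) (a : ℂ)
    (x : V) : Polynomial.aeval M (Polynomial.X - Polynomial.C a) x = M x - a • x := by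
  rw [map_sub, LinearMap.sub_apply, Polynomial.aeval_X, Polynomial.aeval_C,
    Module.algebraMap_end_apply]

/-- Newton polynomial. -/
noncomputable def newt (c t : ℂ) (j : ℕ) : Polynomial ℂ :=
  ∏ l ∈ Finset.range j, (Polynomial.X - Polynomial.C (c + t * l))

theorem newt_dvd (P : Polynomial ℂ) (hP : P ≠ 0) (c t : ℂ) (s : ℕ) (hs : 1 ≤ s)
    (h : (Polynomial.X - Polynomial.C c) ^ s ∣ P) : newt c t s ∣ defPoly P t := by
  have hm : s ≤ P.rootMultiplicity c := (Polynomial.le_rootMultiplicity_iff hP).2 h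
  have hc : c ∈ P.roots.toFinset := by
    rw [Multiset.mem_toFinset, ← Multiset.count_pos, Polynomial.count_roots]; omega
  refine dvd_trans ?_ (Finset.dvd_prod_of_mem _ hc)
  exact Finset.prod_dvd_prod_of_subset _ _ _ (Finset.range_subset_range.2 hm)

theorem continuous_newt {V : Type*} [AddCommGroup V] [Module ℂ V]
    (A D : Module.End ℂ V) (c : ℂ) (φ : V →ₗ[ℂ] ℂ) (j : ℕ) :
    ∀ x, Continuous fun t => φ (Polynomial.aeval (A + t • D) (newt c t j) x) := by
  induction j with
  | zero => intro x; simpa [newt] using continuous_const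
  | succ j ih =>
    intro x
    have : ∀ t, φ (Polynomial.aeval (A + t • D) (newt c t (j+1)) x) =
      φ (Polynomial.aeval (A + t • D) (newt c t j) (A x - c • x)) +
      t * φ (Polynomial.aeval (A + t • D) (newt c t j) (D x - (j:ℂ) • x)) := by
      intro t
      rw [newt, Finset.prod_range_succ, ← newt, map_mul, Module.End.mul_apply,
        aeval_X_sub_C_apply]
      have : (A + t • D) x - (c + t * j) • x = (A x - c • x) + t • (D x - (j : ℂ) • x) := by
        rw [LinearMap.add_apply, LinearMap.smul_apply]
        module
      rw [this, map_add, map_add, map_smul, map_smul, smul_eq_mul]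
    simp only [this]
    exact (ih _).add (continuous_id.mul (ih _))

theorem goodDef_block (P : Polynomial ℂ) (hP : P ≠ 0) {V : Type*} [AddCommGroup V] [Module ℂ V]
    (b : V →ₗ[ℂ] V →ₗ[ℂ] ℂ) (A : Module.End ℂ V)
    (hA : ∀ x y, b (A x) y = b x (A y)) (c : ℂ) (s : ℕ) (hs : 1 ≤ s)
    (hc : (Polynomial.X - Polynomial.C c) ^ s ∣ P)
    (v : ℕ → V) (hv : ∀ j, A (v j) = c • v j + v (j + 1)) (hv0 : v s = 0)
    (e : Module.Basis (Fin s) ℂ V) (he : ∀ j : Fin s, e j = v j) : GoodDef P b A := by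
  have hv1 : ∀ j, s ≤ j → v j = 0 := by
    intro j hj
    induction j, hj using Nat.le_induction with
    | base => exact hv0
    | succ j hj ih => have := hv j; simpa [ih] using this.symm
  set D : Module.End ℂ V := e.constr ℂ (fun j => (j : ℂ) • e j) with hD
  have hDv : ∀ j, D (v j) = (j : ℂ) • v j := by
    intro j
    by_cases h : j < s
    · have := e.constr_basis ℂ (fun j => ((j : ℕ) : ℂ) • e j) ⟨j, h⟩
      rw [he] at this
      exact this
    · simp [hv1 j (not_lt.1 h)]
  have hM : ∀ (t : ℂ) (j : ℕ), (A + t • D) (v j) = (c + t * j) • v j + v (j + 1) := by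
    intro t j
    simp [hDv, hv, add_smul, mul_smul]; abel
  have hnv : ∀ (t : ℂ) (j : ℕ), Polynomial.aeval (A + t • D) (newt c t j) (v 0) = v j := by
    intro t j
    induction j with
    | zero => simp [newt]
    | succ j ih =>
      rw [newt, Finset.prod_range_succ, ← newt, mul_comm, map_mul, Module.End.mul_apply, ih]
      rw [aeval_X_sub_C_apply, hM]
      module
  -- the polynomial operator attached to a vector
  set Tp : ℂ → V → Polynomial ℂ := fun t y => ∑ j : Fin s, e.repr y j • newt c t j with hTp
  have hT0 : ∀ (t : ℂ) y, Polynomial.aeval (A + t • D) (Tp t y) (v 0) = y := by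
    intro t y
    simp only [hTp, map_sum, map_smul, LinearMap.sum_apply, LinearMap.smul_apply, hnv]
    conv_rhs => rw [← e.sum_repr y]
    simp [he]
  have hcomm : ∀ (t : ℂ) (p q : Polynomial ℂ) x, Polynomial.aeval (A + t • D) p
      (Polynomial.aeval (A + t • D) q x) = Polynomial.aeval (A + t • D) q
      (Polynomial.aeval (A + t • D) p x) := by
    intro t p q x
    rw [← Module.End.mul_apply, ← Module.End.mul_apply, ← map_mul, ← map_mul, mul_comm]
  have hTs : ∀ (t : ℂ) x y, Polynomial.aeval (A + t • D) (Tp t y) x =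
      Polynomial.aeval (A + t • D) (Tp t x) y := by
    intro t x y
    conv_lhs => rw [← hT0 t x]
    conv_rhs => rw [← hT0 t y]
    rw [hcomm]
  set B : ℂ → (V →ₗ[ℂ] V →ₗ[ℂ] ℂ) := fun t => LinearMap.mk₂ ℂ
    (fun x y => b (Polynomial.aeval (A + t • D) (Tp t y) x) (v 0))
    (by intros; simp) (by intros; simp)
    (by intros; simp [hTp, add_smul, Finset.sum_add_distrib])
    (by intros; simp [hTp, mul_smul, Finset.mul_sum]) with hB
  have hBa : ∀ t x y, B t x y = b (Polynomial.aeval (A + t • D) (Tp t y) x) (v 0) := by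
    intro t x y; simp [hB]
  refine ⟨D, B, ?_, ?_, ?_, ?_, ?_⟩
  · intro x y
    simp only [hBa, hTp, map_sum, map_smul, LinearMap.sum_apply, LinearMap.smul_apply]
    refine continuous_finsetSum _ fun j _ => ?_
    exact continuous_const.mul (continuous_newt A D c (b.flip (v 0)) j x)
  · ext x y
    rw [hBa]
    have hN : ∀ (j : ℕ) x, b (Polynomial.aeval (A + (0:ℂ) • D) (newt c 0 j) x) (v 0) = b x (v j) := by
      intro j
      induction j with
      | zero => simp [newt]
      | succ j ih =>
        intro x
        rw [newt, Finset.prod_range_succ, ← newt, map_mul, Module.End.mul_apply, ih]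
        have := hA x (v j)
        rw [hv] at this
        simp [Module.algebraMap_end_apply, this]
    simp only [hTp, map_sum, map_smul, LinearMap.sum_apply, LinearMap.smul_apply, hN]
    conv_rhs => rw [← e.sum_repr y]
    simp [he]
  · intro t x y
    rw [hBa, hBa, hTs]
  · intro t x y
    rw [hBa, hBa, hTs t x]
    congr 2
    have := hcomm t (Tp t y) Polynomial.X x
    rw [Polynomial.aeval_X] at this
    rw [this, hTs]
    have := hcomm t (Tp t x) Polynomial.X y
    rw [Polynomial.aeval_X] at this
    rw [this]
  · intro t
    ext y
    obtain ⟨Q, hQ⟩ := newt_dvd P hP c t s hs hc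
    rw [← hT0 t y, hcomm, hQ, mul_comm, map_mul, Module.End.mul_apply, hnv, hv0]
    simp

theorem aeval_selfadj {V : Type*} [AddCommGroup V] [Module ℂ V]
    (b : V →ₗ[ℂ] V →ₗ[ℂ] ℂ) (A : Module.End ℂ V) (hA : ∀ x y, b (A x) y = b x (A y))
    (p : Polynomial ℂ) : ∀ x y, b (Polynomial.aeval A p x) y = b x (Polynomial.aeval A p y) := by
  induction p using Polynomial.induction_on' with
  | add p q hp hq => intro x y; simp [hp, hq]
  | monomial n a =>
    have : ∀ n x y, b ((A ^ n) x) y = b x ((A ^ n) y) := by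
      intro n
      induction n with
      | zero => simp
      | succ n ih =>
        intro x y
        rw [pow_succ, Module.End.mul_apply, ih, hA, ← Module.End.mul_apply, ← pow_succ', pow_succ]
    intro x y
    simp [Polynomial.aeval_monomial, this, Module.algebraMap_end_apply]

theorem extract_block {V : Type*} [AddCommGroup V] [Module ℂ V] [FiniteDimensional ℂ V]
    [Nontrivial V] (b : V →ₗ[ℂ] V →ₗ[ℂ] ℂ) (hb : ∀ x y, b x y = b y x)
    (hnd : ∀ x, (∀ y, b x y = 0) → x = 0)
    (A : Module.End ℂ V) (hA : ∀ x y, b (A x) y = b x (A y))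
    (P : Polynomial ℂ) (hP : Polynomial.aeval A P = 0) :
    ∃ (c : ℂ) (s : ℕ) (u : V), 1 ≤ s ∧ (Polynomial.X - Polynomial.C c) ^ s ∣ P ∧
      Polynomial.aeval A ((Polynomial.X - Polynomial.C c) ^ s) u = 0 ∧
      b (Polynomial.aeval A ((Polynomial.X - Polynomial.C c) ^ (s - 1)) u) u ≠ 0 := by
  have hAint : IsIntegral ℂ A := Algebra.IsIntegral.isIntegral A
  have hp0 : minpoly ℂ A ≠ 0 := minpoly.ne_zero hAint
  obtain ⟨c, hc⟩ := IsAlgClosed.exists_root (minpoly ℂ A) (minpoly.degree_pos hAint).ne'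
  set s := (minpoly ℂ A).rootMultiplicity c with hs
  have hs1 : 1 ≤ s := (Polynomial.rootMultiplicity_pos hp0).2 hc
  obtain ⟨r, hr, hrd⟩ := Polynomial.exists_eq_pow_rootMultiplicity_mul_and_not_dvd _ hp0 c
  rw [← hs] at hr
  set g := (Polynomial.X - Polynomial.C c) ^ (s - 1) * r * r with hg
  have hgA : Polynomial.aeval A g ≠ 0 := by
    intro h
    have hd := minpoly.dvd ℂ A h
    rw [hr, hg] at hd
    obtain ⟨s', hs'⟩ : ∃ s', s = s' + 1 := ⟨s - 1, by omega⟩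
    rw [hs', Nat.add_sub_cancel, pow_succ, mul_assoc, mul_assoc] at hd
    have hd2 := (mul_dvd_mul_iff_left (pow_ne_zero _ (Polynomial.X_sub_C_ne_zero c))).1 hd
    have hr0 : r ≠ 0 := by rintro rfl; exact hrd (dvd_zero _)
    exact hrd ((mul_dvd_mul_iff_right hr0).1 hd2)
  have : ∃ x, (b ∘ₗ Polynomial.aeval A g) x x ≠ 0 := by
    apply LinearMap.BilinForm.exists_bilinForm_self_ne_zero
    · intro h
      apply hgA
      ext x
      apply hnd
      intro y
      have := LinearMap.congr_fun₂ h x y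
      simpa using this
    · constructor
      intro x y
      simp only [LinearMap.comp_apply, RingHom.id_apply]
      rw [aeval_selfadj b A hA, hb]
  obtain ⟨x, hx⟩ := this
  refine ⟨c, s, Polynomial.aeval A r x, hs1, ?_, ?_, ?_⟩
  · exact (Dvd.intro _ hr.symm).trans (minpoly.dvd ℂ A hP)
  · rw [← Module.End.mul_apply, ← map_mul, ← hr, minpoly.aeval, LinearMap.zero_apply]
  · rw [← aeval_selfadj b A hA, ← Module.End.mul_apply, ← map_mul, ← Module.End.mul_apply,
      ← map_mul]
    rw [LinearMap.comp_apply] at hx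
    convert hx using 5
    rw [hg]; ring

theorem gram_inj (s : ℕ) (β : ℕ → ℂ) (h0 : β (s - 1) ≠ 0) (h1 : ∀ k, s ≤ k → β k = 0)
    (a : Fin s → ℂ) (ha : ∀ i : Fin s, ∑ j, a j * β (j + i) = 0) : a = 0 := by
  have key : ∀ m : ℕ, ∀ h : m < s, a ⟨m, h⟩ = 0 := by
    intro m
    induction m using Nat.strong_induction_on with
    | _ m ih =>
      intro h
      have := ha ⟨s - 1 - m, by omega⟩
      rw [Finset.sum_eq_single ⟨m, h⟩] at this
      · simp only at this
        rw [show m + (s - 1 - m) = s - 1 by omega] at this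
        exact (mul_eq_zero.1 this).resolve_right h0
      · rintro ⟨k, hk⟩ - hne
        have hne' : k ≠ m := fun h => hne (by simp [h])
        rcases lt_or_gt_of_ne hne' with h' | h'
        · rw [ih k h' hk, zero_mul]
        · rw [h1 _ (by simp only; omega), mul_zero]
      · simp
  ext ⟨m, h⟩
  exact key m h

/-- Splitting off an orthogonal invariant nondegenerate subspace. -/
theorem split_off {V : Type*} [AddCommGroup V] [Module ℂ V] [FiniteDimensional ℂ V]
    (b : V →ₗ[ℂ] V →ₗ[ℂ] ℂ) (hb : ∀ x y, b x y = b y x)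
    (hnd : ∀ x, (∀ y, b x y = 0) → x = 0)
    (A : Module.End ℂ V) (hA : ∀ x y, b (A x) y = b x (A y))
    (U : Submodule ℂ V) (hU : ∀ x ∈ U, A x ∈ U)
    (hUn : ∀ x ∈ U, (∀ y ∈ U, b x y = 0) → x = 0) :
    ∃ W : Submodule ℂ V, IsCompl U W ∧ (∀ x ∈ W, A x ∈ W) ∧
      (∀ x ∈ U, ∀ y ∈ W, b x y = 0) ∧ ∀ x ∈ W, (∀ y ∈ W, b x y = 0) → x = 0 := by
  have hrefl : LinearMap.BilinForm.IsRefl b := fun x y h => by rw [hb, h]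
  have hc : IsCompl U (LinearMap.BilinForm.orthogonal b U) := by
    apply LinearMap.BilinForm.isCompl_orthogonal_of_restrict_nondegenerate hrefl
    apply LinearMap.BilinForm.nondegenerate_restrict_of_disjoint_orthogonal b hrefl
    rw [Submodule.disjoint_def]
    intro x hx hx'
    refine hUn x hx fun y hy => ?_
    rw [hb]
    exact hx' y hy
  have ho : ∀ x ∈ U, ∀ y ∈ LinearMap.BilinForm.orthogonal b U, b x y = 0 := fun x hx y hy => hy x hx
  refine ⟨LinearMap.BilinForm.orthogonal b U, hc, ?_, ho, ?_⟩
  · intro x hx y hy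
    show b y (A x) = 0
    rw [← hA]
    exact hx _ (hU y hy)
  · intro x hx h
    refine hnd x fun y => ?_
    have : y ∈ U ⊔ LinearMap.BilinForm.orthogonal b U := by rw [hc.sup_eq_top]; trivial
    obtain ⟨u, hu, w, hw, rfl⟩ := Submodule.mem_sup.1 this
    rw [map_add, h w hw, hb, ho u hu x hx, add_zero]

theorem goodDef_all (P : Polynomial ℂ) (hP : P ≠ 0) : ∀ (d : ℕ) (V : Type) [AddCommGroup V]
    [Module ℂ V] [FiniteDimensional ℂ V], Module.finrank ℂ V = d →
    ∀ (b : V →ₗ[ℂ] V →ₗ[ℂ] ℂ), (∀ x y, b x y = b y x) →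
    (∀ x, (∀ y, b x y = 0) → x = 0) → ∀ A : Module.End ℂ V, (∀ x y, b (A x) y = b x (A y)) →
    Polynomial.aeval A P = 0 → GoodDef P b A := by
  intro d
  induction d using Nat.strong_induction_on with
  | _ d ih =>
  intro V _ _ _ hd b hb hnd A hA hPA
  rcases subsingleton_or_nontrivial V with hV | hV
  · refine ⟨0, fun _ => b, fun x y => continuous_const, rfl, fun _ => hb, fun t x y => ?_, fun t => ?_⟩
    · simpa using hA x y
    · ext x; exact Subsingleton.elim _ _
  obtain ⟨c, s, u, hs, hcP, hu0, hu1⟩ := extract_block b hb hnd A hA P hPA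
  set v : ℕ → V := fun j => Polynomial.aeval A ((Polynomial.X - Polynomial.C c) ^ j) u with hv
  have hvs : ∀ j, A (v j) = c • v j + v (j + 1) := by
    intro j
    simp only [hv]
    rw [pow_succ', map_mul, Module.End.mul_apply, aeval_X_sub_C_apply]
    module
  have hv1 : ∀ k, s ≤ k → v k = 0 := by
    intro k hk
    simp only [hv]
    rw [show k = (k - s) + s by omega, pow_add, map_mul, Module.End.mul_apply, hu0, map_zero]
  have hgram : ∀ i j, b (v i) (v j) = b (v (i + j)) u := by
    intro i j
    simp only [hv]
    rw [← aeval_selfadj b A hA, ← Module.End.mul_apply, ← map_mul, ← pow_add, add_comm]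
  have hinj : ∀ a : Fin s → ℂ, (∀ i : Fin s, b (∑ j, a j • v j) (v i) = 0) → a = 0 := by
    intro a ha
    refine gram_inj s (fun k => b (v k) u) hu1 (fun k hk => by simp [hv1 k hk]) a fun i => ?_
    have := ha i
    simpa [hgram] using this
  have hli : LinearIndependent ℂ (fun j : Fin s => v j) := by
    rw [Fintype.linearIndependent_iff]
    intro a ha
    have := hinj a (by simp [ha])
    simp [this]
  set U := Submodule.span ℂ (Set.range fun j : Fin s => v j) with hUdef
  have hvU : ∀ j, v j ∈ U := by
    intro j
    by_cases h : j < s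
    · exact Submodule.subset_span ⟨⟨j, h⟩, rfl⟩
    · rw [hv1 j (not_lt.1 h)]; exact U.zero_mem
  have hUA : ∀ x ∈ U, A x ∈ U := by
    intro x hx
    induction hx using Submodule.span_induction with
    | mem x h =>
      obtain ⟨j, rfl⟩ := h
      simp only [hvs]
      exact U.add_mem (U.smul_mem _ (hvU _)) (hvU _)
    | zero => simp
    | add x y _ _ hx hy => rw [map_add]; exact U.add_mem hx hy
    | smul a x _ hx => rw [map_smul]; exact U.smul_mem _ hx
  have hUn : ∀ x ∈ U, (∀ y ∈ U, b x y = 0) → x = 0 := by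
    intro x hx h
    obtain ⟨a, rfl⟩ := (Submodule.mem_span_range_iff_exists_fun ℂ).1 hx
    have := hinj a fun i => h _ (hvU i)
    simp [this]
  obtain ⟨W, hc, hWA, hUW, hWn⟩ := split_off b hb hnd A hA U hUA hUn
  have hfin : Module.finrank ℂ W < d := by
    rw [← hd]
    apply Submodule.finrank_lt
    intro h
    have : U = ⊥ := by
      have := hc.inf_eq_bot
      rwa [h, inf_top_eq] at this
    have h0 := hvU 0
    rw [this, Submodule.mem_bot] at h0
    have : u = 0 := by simpa [hv] using h0
    exact hu1 (by simp [this])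
  have hAU : ∀ x : U, A (U.subtype x) = U.subtype (A.restrict hUA x) := fun x => rfl
  have hAW : ∀ x : W, A (W.subtype x) = W.subtype (A.restrict hWA x) := fun x => rfl
  refine goodDef_glue P U.subtype W.subtype (U.projectionOnto W hc) (W.projectionOnto U hc.symm)
    (fun x => by simp) (fun x => by simp) (fun x => by simp) (fun x => by simp) (fun x => ?_) b A
    (b.domRestrict₁₂ U U) (A.restrict hUA) (b.domRestrict₁₂ W W) (A.restrict hWA)
    (fun x y => rfl) (fun x y => rfl) (fun x y => hUW _ x.2 _ y.2)
    (fun x y => by rw [hb]; exact hUW _ y.2 _ x.2) (fun x => rfl) (fun x => rfl) ?_ ?_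
  · simpa using Submodule.projection_add_projection_eq_self hc x
  · refine goodDef_block P hP _ _ (fun x y => hA _ _) c s hs hcP
      (fun j => ⟨v j, hvU j⟩) (fun j => Subtype.ext (hvs j)) (Subtype.ext (hv1 s le_rfl))
      (Module.Basis.span hli) (fun j => Module.Basis.span_apply hli j)
  · refine ih _ hfin W rfl _ (fun x y => hb _ _) (fun x hx => ?_) _ (fun x y => hA _ _) ?_
    · exact Subtype.ext (hWn x x.2 fun y hy => hx ⟨y, hy⟩)
    · ext x
      have := aeval_intertwine W.subtype A (A.restrict hWA) hAW P x
      rw [hPA] at this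
      simpa using this.symm

theorem exists_orthonormal_eigen (P : Polynomial ℂ) (hP : Squarefree P) : ∀ (d : ℕ) (V : Type)
    [AddCommGroup V] [Module ℂ V] [FiniteDimensional ℂ V], Module.finrank ℂ V = d →
    ∀ (b : V →ₗ[ℂ] V →ₗ[ℂ] ℂ), (∀ x y, b x y = b y x) →
    (∀ x, (∀ y, b x y = 0) → x = 0) → ∀ A : Module.End ℂ V, (∀ x y, b (A x) y = b x (A y)) →
    Polynomial.aeval A P = 0 →
    ∃ (e : Fin d → V) (l : Fin d → ℂ), (∀ i j, b (e i) (e j) = if i = j then 1 else 0) ∧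
      ∀ i, A (e i) = l i • e i := by
  intro d
  induction d with
  | zero =>
    intros
    exact ⟨Fin.elim0, Fin.elim0, fun i => i.elim0, fun i => i.elim0⟩
  | succ d ih =>
    intro V _ _ _ hd b hb hnd A hA hPA
    have : Nontrivial V := Module.nontrivial_of_finrank_pos (R := ℂ) (by omega)
    obtain ⟨c, s, u, hs, hcP, hu0, hu1⟩ := extract_block b hb hnd A hA P hPA
    have hs1 : s = 1 := by
      by_contra hne
      have h2 : (Polynomial.X - Polynomial.C c) * (Polynomial.X - Polynomial.C c) ∣ P := by
        rw [← sq]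
        exact (pow_dvd_pow _ (by omega)).trans hcP
      exact Polynomial.not_isUnit_X_sub_C c (hP _ h2)
    subst hs1
    rw [pow_one, aeval_X_sub_C_apply, sub_eq_zero] at hu0
    simp only [tsub_self, pow_zero, map_one, Module.End.one_apply] at hu1
    obtain ⟨z, hz⟩ := IsAlgClosed.exists_pow_nat_eq (b u u) (n := 2) (by norm_num)
    have hz0 : z ≠ 0 := by rintro rfl; apply hu1; rw [← hz]; simp
    set w := z⁻¹ • u with hw
    have hww : b w w = 1 := by
      simp only [hw, map_smul, LinearMap.smul_apply, smul_eq_mul, ← hz]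
      field_simp
    have hAw : A w = c • w := by rw [hw, map_smul, hu0, smul_comm]
    have hw0 : w ≠ 0 := by intro h; simp [h] at hww
    obtain ⟨W, hc, hWA, hUW, hWn⟩ := split_off b hb hnd A hA (Submodule.span ℂ {w}) (by
      intro x hx
      obtain ⟨a, rfl⟩ := Submodule.mem_span_singleton.1 hx
      rw [map_smul, hAw]
      exact Submodule.smul_mem _ _ (Submodule.smul_mem _ _ (Submodule.mem_span_singleton_self w))) (by
      intro x hx h
      obtain ⟨a, rfl⟩ := Submodule.mem_span_singleton.1 hx
      have := h w (Submodule.mem_span_singleton_self w)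
      rw [LinearMap.map_smul₂, hww] at this
      have : a = 0 := by simpa using this
      simp [this])
    have hfin : Module.finrank ℂ W = d := by
      have := Submodule.finrank_add_eq_of_isCompl hc
      rw [finrank_span_singleton hw0] at this
      omega
    have hAW : ∀ x : W, A (W.subtype x) = W.subtype (A.restrict hWA x) := fun x => rfl
    obtain ⟨e, l, he, hl⟩ := ih W hfin (b.domRestrict₁₂ W W) (fun x y => hb _ _)
      (fun x hx => Subtype.ext (hWn x x.2 fun y hy => hx ⟨y, hy⟩)) (A.restrict hWA)
      (fun x y => hA _ _) (by
        ext x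
        have := aeval_intertwine W.subtype A (A.restrict hWA) hAW P x
        rw [hPA] at this
        simpa using this.symm)
    refine ⟨Fin.cons w (fun i => (e i : V)), Fin.cons c l, ?_, ?_⟩
    · have hwe : ∀ i, b w (e i) = 0 := fun i =>
        hUW _ (Submodule.mem_span_singleton_self w) _ (e i).2
      intro i j
      refine Fin.cases ?_ (fun i => ?_) i <;> refine Fin.cases ?_ (fun j => ?_) j
      · simpa using hww
      · simpa [(Fin.succ_ne_zero j).symm] using hwe j
      · simpa [hb _ w] using hwe i
      · simp only [Fin.cons_succ, Fin.succ_inj]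
        exact he i j
    · intro i
      refine Fin.cases ?_ (fun i => ?_) i
      · simpa using hAw
      · simpa using congrArg W.subtype (hl i)

open Filter Topology in
theorem exists_sqrt_near_one {E : Type*} [NormedRing E] [NormedAlgebra ℂ E] [CompleteSpace E] :
    ∃ ρ : E → E, Tendsto ρ (𝓝 1) (𝓝 1) ∧ (∀ᶠ g in 𝓝 (1 : E), ρ g * ρ g = g) ∧
      ∀ᶠ x in 𝓝 (1 : E), ρ (x * x) = x := by
  have h2 : (2 : ℂ) ≠ 0 := two_ne_zero
  have h : HasStrictFDerivAt (fun x : E => x * x)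
      ((ContinuousLinearEquiv.smulLeft (Units.mk0 (2 : ℂ) h2) : E ≃L[ℂ] E) : E →L[ℂ] E) 1 := by
    have := (hasStrictFDerivAt_id (𝕜 := ℂ) (1 : E)).mul' (hasStrictFDerivAt_id (𝕜 := ℂ) (1 : E))
    refine this.congr_fderiv ?_
    ext x
    simp [two_smul]
  refine ⟨h.localInverse, ?_, ?_, ?_⟩
  · have := h.localInverse_tendsto
    simpa using this
  · have := h.eventually_right_inverse
    simpa using this
  · exact h.eventually_left_inverse

open Filter Topology in
theorem exists_symm_sqrt (n : ℕ) (G : ℂ → Matrix (Fin n) (Fin n) ℂ) (hG : Tendsto G (𝓝 0) (𝓝 1))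
    (hs : ∀ t, (G t)ᵀ = G t) :
    ∃ R : ℂ → Matrix (Fin n) (Fin n) ℂ, Tendsto R (𝓝 0) (𝓝 1) ∧
      ∀ᶠ t in 𝓝 0, (R t)ᵀ = R t ∧ R t * R t = G t := by
  have key : ∃ ρ : Matrix (Fin n) (Fin n) ℂ → Matrix (Fin n) (Fin n) ℂ,
      Tendsto ρ (𝓝 1) (𝓝 1) ∧ (∀ᶠ g in 𝓝 (1 : Matrix (Fin n) (Fin n) ℂ), ρ g * ρ g = g) ∧
      ∀ᶠ x in 𝓝 (1 : Matrix (Fin n) (Fin n) ℂ), ρ (x * x) = x := by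
    let : NormedRing (Matrix (Fin n) (Fin n) ℂ) := Matrix.linftyOpNormedRing
    let : NormedAlgebra ℂ (Matrix (Fin n) (Fin n) ℂ) := Matrix.linftyOpNormedAlgebra
    have : CompleteSpace (Matrix (Fin n) (Fin n) ℂ) := FiniteDimensional.complete ℂ _
    exact exists_sqrt_near_one
  obtain ⟨ρ, h1, h2, h3⟩ := key
  have hR : Tendsto (fun t => ρ (G t)) (𝓝 0) (𝓝 1) := h1.comp hG
  have hRT : Tendsto (fun t => (ρ (G t))ᵀ) (𝓝 0) (𝓝 1) := by
    have hc : Continuous fun M : Matrix (Fin n) (Fin n) ℂ => Mᵀ := continuous_id.matrix_transpose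
    have := (hc.tendsto 1).comp hR
    rw [Matrix.transpose_one] at this
    exact this
  refine ⟨fun t => ρ (G t), hR, ?_⟩
  filter_upwards [hG.eventually h2, hRT.eventually h3] with t ht2 ht3
  refine ⟨?_, ht2⟩
  rw [← ht3, ← Matrix.transpose_mul, ht2, hs]

theorem defPoly_monic (P : Polynomial ℂ) (t : ℂ) : (defPoly P t).Monic :=
  Polynomial.monic_prod_of_monic _ _ fun _ _ =>
    Polynomial.monic_prod_of_monic _ _ fun _ _ => Polynomial.monic_X_sub_C _

theorem defPoly_natDegree (P : Polynomial ℂ) (t : ℂ) :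
    (defPoly P t).natDegree ≤ P.natDegree := by
  refine le_trans ?_ P.card_roots'
  rw [← Multiset.toFinset_sum_count_eq]
  refine (Polynomial.natDegree_prod_le _ _).trans (Finset.sum_le_sum fun c _ => ?_)
  refine (Polynomial.natDegree_prod_le _ _).trans ?_
  simp only [Polynomial.natDegree_X_sub_C, Finset.sum_const, Finset.card_range, smul_eq_mul, mul_one,
    Polynomial.count_roots, le_refl]

open Filter Topology in
theorem defPoly_squarefree (P : Polynomial ℂ) :
    ∀ᶠ t in 𝓝[≠] (0 : ℂ), Squarefree (defPoly P t) := by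
  have h : ∀ᶠ t in 𝓝[≠] (0 : ℂ),
      ∀ x ∈ P.roots.toFinset.sigma (fun c => Finset.range (P.rootMultiplicity c)),
      ∀ y ∈ P.roots.toFinset.sigma (fun c => Finset.range (P.rootMultiplicity c)),
      x.1 + t * x.2 = y.1 + t * y.2 → x = y := by
    rw [Filter.eventually_all_finset]
    rintro ⟨c, l⟩ -
    rw [Filter.eventually_all_finset]
    rintro ⟨c', l'⟩ -
    by_cases hc : c = c'
    · subst hc
      filter_upwards [self_mem_nhdsWithin] with t ht h
      have ht' : t ≠ 0 := ht
      have : (l : ℂ) = l' := mul_left_cancel₀ ht' (add_left_cancel h)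
      rw [Nat.cast_inj] at this
      rw [this]
    · have hcont : ContinuousAt (fun t : ℂ => (c + t * l) - (c' + t * l')) 0 := by fun_prop
      have := hcont.eventually_ne (y := 0) (by simpa [sub_eq_zero] using hc)
      filter_upwards [this.filter_mono nhdsWithin_le_nhds] with t ht h
      exact absurd (sub_eq_zero.2 h) ht
  filter_upwards [h] with t ht
  apply Polynomial.Separable.squarefree
  rw [defPoly, Finset.prod_sigma']
  exact Polynomial.separable_prod_X_sub_C_iff'.2 ht

/-- The standard bilinear form. -/
noncomputable def stdForm (n : ℕ) : (Fin n → ℂ) →ₗ[ℂ] (Fin n → ℂ) →ₗ[ℂ] ℂ :=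
  LinearMap.mk₂ ℂ (fun x y => x ⬝ᵥ y) (fun _ _ _ => add_dotProduct _ _ _)
    (fun _ _ _ => smul_dotProduct _ _ _) (fun _ _ _ => dotProduct_add _ _ _)
    (fun _ _ _ => dotProduct_smul _ _ _)

theorem stdForm_apply (n : ℕ) (x y : Fin n → ℂ) : stdForm n x y = x ⬝ᵥ y := rfl

theorem stdForm_symm (n : ℕ) (x y : Fin n → ℂ) : stdForm n x y = stdForm n y x :=
  dotProduct_comm x y

theorem stdForm_nondeg (n : ℕ) (x : Fin n → ℂ) (h : ∀ y, stdForm n x y = 0) : x = 0 :=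
  dotProduct_eq_zero _ h

theorem stdForm_selfadj (n : ℕ) (A : Matrix (Fin n) (Fin n) ℂ) (hA : Aᵀ = A) (x y : Fin n → ℂ) :
    stdForm n (Matrix.toLin' A x) y = stdForm n x (Matrix.toLin' A y) := by
  rw [stdForm_apply, stdForm_apply, Matrix.toLin'_apply, Matrix.toLin'_apply,
    Matrix.dotProduct_mulVec, ← Matrix.mulVec_transpose, hA]

theorem aeval_toLin' (n : ℕ) (A : Matrix (Fin n) (Fin n) ℂ) (P : Polynomial ℂ) :
    Polynomial.aeval (Matrix.toLin' A) P = Matrix.toLin' (Polynomial.aeval A P) :=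
  Polynomial.aeval_algHom_apply (Matrix.toLinAlgEquiv' : Matrix (Fin n) (Fin n) ℂ ≃ₐ[ℂ] _) A P

theorem orth_diag (n : ℕ) (A : Matrix (Fin n) (Fin n) ℂ) (hA : Aᵀ = A) (P : Polynomial ℂ)
    (hP : Squarefree P) (hPA : Polynomial.aeval A P = 0) :
    ∃ Q : Matrix (Fin n) (Fin n) ℂ, Q * Qᵀ = 1 ∧
        ∃ d : Fin n → ℂ, Q⁻¹ * A * Q = Matrix.diagonal d := by
  obtain ⟨e, l, he, hl⟩ := exists_orthonormal_eigen P hP n (Fin n → ℂ) (by simp) (stdForm n)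
    (stdForm_symm n) (stdForm_nondeg n) (Matrix.toLin' A) (stdForm_selfadj n A hA)
    (by rw [aeval_toLin', hPA, map_zero])
  set Q : Matrix (Fin n) (Fin n) ℂ := Matrix.of fun i j => e j i with hQ
  have h1 : Qᵀ * Q = 1 := by
    ext i j
    rw [Matrix.one_apply, ← he i j]
    rfl
  have h2 : Q * Qᵀ = 1 := mul_eq_one_comm.1 h1
  refine ⟨Q, h2, l, ?_⟩
  have h3 : Q⁻¹ = Qᵀ := Matrix.inv_eq_right_inv h2
  have h4 : A * Q = Q * Matrix.diagonal l := by
    ext i j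
    have := congrFun (hl j) i
    rw [Matrix.mul_diagonal, mul_comm]
    exact this
  rw [h3, Matrix.mul_assoc, h4, ← Matrix.mul_assoc, h1, Matrix.one_mul]

theorem not_li_of_poly (n N : ℕ) (A : Matrix (Fin n) (Fin n) ℂ) (P : Polynomial ℂ) (h0 : P ≠ 0)
    (hd : P.natDegree < N) (hPA : Polynomial.aeval A P = 0) :
    ¬ LinearIndependent ℂ (fun r : Fin N => A ^ (r : ℕ)) := by
  rw [Fintype.not_linearIndependent_iff]
  refine ⟨fun i => P.coeff i, ?_, ⟨P.natDegree, hd⟩, ?_⟩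
  · rw [Polynomial.aeval_eq_sum_range' hd, Finset.sum_range] at hPA
    exact hPA
  · simpa using h0

theorem poly_of_not_li (n N : ℕ) (A : Matrix (Fin n) (Fin n) ℂ)
    (h : ¬ LinearIndependent ℂ (fun r : Fin N => A ^ (r : ℕ))) :
    ∃ P : Polynomial ℂ, P ≠ 0 ∧ P.natDegree < N ∧ Polynomial.aeval A P = 0 := by
  rw [Fintype.not_linearIndependent_iff] at h
  obtain ⟨g, hg, i, hi⟩ := h
  have hN : 0 < N := i.pos
  have h0 : (∑ r : Fin N, Polynomial.monomial (r : ℕ) (g r)) ≠ 0 := by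
    intro h
    have := congrArg (fun p => Polynomial.coeff p (i : ℕ)) h
    simp [Polynomial.finsetSum_coeff, Polynomial.coeff_monomial, Fin.val_inj] at this
    exact hi this
  refine ⟨∑ r : Fin N, Polynomial.monomial (r : ℕ) (g r), h0, ?_, ?_⟩
  · have : (∑ r : Fin N, Polynomial.monomial (r : ℕ) (g r)).natDegree ≤ N - 1 := by
      refine Polynomial.natDegree_sum_le_of_forall_le _ _ fun r _ => ?_
      refine (Polynomial.natDegree_monomial_le _).trans ?_
      have := r.2
      omega
    omega
  · rw [map_sum, ← hg]
    refine Finset.sum_congr rfl fun r _ => ?_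
    rw [Polynomial.aeval_monomial, Algebra.smul_def]

theorem aeval_conj (n : ℕ) (R S M : Matrix (Fin n) (Fin n) ℂ) (h : S * R = 1)
    (P : Polynomial ℂ) (hP : Polynomial.aeval M P = 0) :
    Polynomial.aeval (R * M * S) P = 0 := by
  apply Matrix.toLin'.injective
  rw [← aeval_toLin', map_zero]
  have h' : R * S = 1 := mul_eq_one_comm.1 h
  refine LinearMap.ext fun x => ?_
  have hx : x = Matrix.toLin' R (Matrix.toLin' S x) := by
    rw [← LinearMap.comp_apply, ← Matrix.toLin'_mul, h', Matrix.toLin'_one, LinearMap.id_apply]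
  rw [hx, aeval_intertwine (Matrix.toLin' R) _ (Matrix.toLin' M), aeval_toLin', hP, map_zero]
  · simp
  · intro y
    rw [← LinearMap.comp_apply, ← Matrix.toLin'_mul, Matrix.mul_assoc, h, Matrix.mul_one,
      Matrix.toLin'_mul, LinearMap.comp_apply]

/-- The orthogonally diagonalizable matrices form a Zariski dense subset of the
variety of `k`-degenerate complex symmetric `n × n` matrices. -/
theorem stmt_1 (n k : ℕ) (hn : 2 ≤ n) (hk : k ≤ n - 1)
    (f : MvPolynomial (Fin n × Fin n) ℂ)
    (hvan : ∀ A : Matrix (Fin n) (Fin n) ℂ, Aᵀ = A →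
      (∃ Q : Matrix (Fin n) (Fin n) ℂ, Q * Qᵀ = 1 ∧
        ∃ d : Fin n → ℂ, Q⁻¹ * A * Q = Matrix.diagonal d) →
      ¬ LinearIndependent ℂ (fun r : Fin (n - k + 1) => A ^ (r : ℕ)) →
      MvPolynomial.eval (fun p => A p.1 p.2) f = 0) :
    ∀ A : Matrix (Fin n) (Fin n) ℂ, Aᵀ = A →
      ¬ LinearIndependent ℂ (fun r : Fin (n - k + 1) => A ^ (r : ℕ)) →
      MvPolynomial.eval (fun p => A p.1 p.2) f = 0 := by
  intro A hA hAk
  obtain ⟨P, hP0, hPd, hPA⟩ := poly_of_not_li n _ A hAk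
  obtain ⟨D, B, hBc, hB0, hBs, hBa, hBP⟩ := goodDef_all P hP0 n (Fin n → ℂ) (by simp) (stdForm n)
    (stdForm_symm n) (stdForm_nondeg n) (Matrix.toLin' A) (stdForm_selfadj n A hA)
    (by rw [aeval_toLin', hPA, map_zero])
  set M : ℂ → Matrix (Fin n) (Fin n) ℂ := fun t => A + t • LinearMap.toMatrix' D with hM
  have hMlin : ∀ t : ℂ, Matrix.toLin' (M t) = Matrix.toLin' A + t • D := by
    intro t; simp [hM]
  have hMP : ∀ t, Polynomial.aeval (M t) (defPoly P t) = 0 := by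
    intro t
    apply Matrix.toLin'.injective
    rw [← aeval_toLin', hMlin, hBP, map_zero]
  set G : ℂ → Matrix (Fin n) (Fin n) ℂ := fun t => LinearMap.toMatrix₂' ℂ (B t) with hG
  have hGs : ∀ t, (G t)ᵀ = G t := by
    intro t
    ext i j
    simp only [hG, Matrix.transpose_apply, LinearMap.toMatrix₂'_apply]
    exact hBs _ _ _
  have hGM : ∀ t, (M t)ᵀ * G t = G t * M t := by
    intro t
    have h : (B t).compl₁₂ (Matrix.toLin' (M t)) LinearMap.id =
        (B t).compl₁₂ LinearMap.id (Matrix.toLin' (M t)) := by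
      refine LinearMap.ext₂ fun x y => ?_
      simp only [LinearMap.compl₁₂_apply, LinearMap.id_apply, hMlin]
      exact hBa t x y
    have := congrArg (LinearMap.toMatrix₂' ℂ) h
    simpa [LinearMap.toMatrix₂'_compl₁₂] using this
  have hG1 : Filter.Tendsto G (nhds 0) (nhds 1) := by
    have hc : Continuous G := by
      refine continuous_matrix fun i j => ?_
      simp only [hG, LinearMap.toMatrix₂'_apply]
      exact hBc _ _
    have h0 : G 0 = 1 := by
      ext i j
      simp only [hG, hB0, LinearMap.toMatrix₂'_apply, stdForm_apply]
      simp [Matrix.one_apply, Pi.single_apply, eq_comm]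
    rw [← h0]
    exact hc.tendsto 0
  obtain ⟨R, hR1, hR⟩ := exists_symm_sqrt n G hG1 hGs
  have hRinv : Filter.Tendsto (fun t => (R t)⁻¹) (nhds 0) (nhds 1) := by
    have hc : ContinuousAt (Inv.inv : Matrix (Fin n) (Fin n) ℂ → _) 1 := by
      apply continuousAt_matrix_inv
      rw [Matrix.det_one, Ring.inverse_eq_inv']
      exact continuousAt_inv₀ one_ne_zero
    have := hc.tendsto.comp hR1
    rw [inv_one] at this
    exact this
  have hRu : ∀ᶠ t in nhds (0 : ℂ), IsUnit (R t).det := by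
    have hc : Continuous fun N : Matrix (Fin n) (Fin n) ℂ => N.det := continuous_id.matrix_det
    have h1 := (hc.tendsto 1).comp hR1
    have := h1.eventually_ne (b₂ := 0) (by simp)
    filter_upwards [this] with t ht
    exact isUnit_iff_ne_zero.2 ht
  set A' : ℂ → Matrix (Fin n) (Fin n) ℂ := fun t => R t * M t * (R t)⁻¹ with hA'
  have hMt : Filter.Tendsto M (nhds 0) (nhds A) := by
    have hc : Continuous M := by
      simp only [hM]; fun_prop
    have h0 : M 0 = A := by simp [hM]
    have := hc.tendsto 0
    rwa [h0] at this
  have hA't : Filter.Tendsto A' (nhds 0) (nhds A) := by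
    have := (hR1.mul hMt).mul hRinv
    simpa using this
  have hfc : Continuous fun N : Matrix (Fin n) (Fin n) ℂ =>
      MvPolynomial.eval (fun p : Fin n × Fin n => N p.1 p.2) f := by
    refine (MvPolynomial.continuous_eval f).comp ?_
    exact continuous_pi fun p => continuous_id.matrix_elem p.1 p.2
  have hlim := ((hfc.tendsto A).comp hA't).mono_left (nhdsWithin_le_nhds (s := {0}ᶜ))
  have hzero : ∀ᶠ t in nhdsWithin (0 : ℂ) {0}ᶜ,
      MvPolynomial.eval (fun p : Fin n × Fin n => A' t p.1 p.2) f = 0 := by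
    filter_upwards [hR.filter_mono nhdsWithin_le_nhds, hRu.filter_mono nhdsWithin_le_nhds,
      defPoly_squarefree P] with t ⟨hRt, hRG⟩ hu hsq
    have hRi : (R t)⁻¹ * R t = 1 := Matrix.nonsing_inv_mul _ hu
    have hRi' : R t * (R t)⁻¹ = 1 := Matrix.mul_nonsing_inv _ hu
    have hs : (A' t)ᵀ = A' t := by
      have h1 := hGM t
      rw [← hRG] at h1
      simp only [hA', Matrix.transpose_mul, Matrix.transpose_nonsing_inv, hRt]
      calc (R t)⁻¹ * ((M t)ᵀ * R t)
          = (R t)⁻¹ * ((M t)ᵀ * (R t * R t)) * (R t)⁻¹ := by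
            simp only [Matrix.mul_assoc, hRi', Matrix.mul_one]
        _ = ((R t)⁻¹ * R t) * (R t * M t) * (R t)⁻¹ := by
            rw [h1]; simp only [Matrix.mul_assoc]
        _ = R t * M t * (R t)⁻¹ := by rw [hRi, Matrix.one_mul]
    have hAP : Polynomial.aeval (A' t) (defPoly P t) = 0 :=
      aeval_conj n _ _ _ hRi _ (hMP t)
    refine hvan (A' t) hs (orth_diag n _ hs _ hsq hAP) ?_
    exact not_li_of_poly n _ _ _ (defPoly_monic P t).ne_zero
      ((defPoly_natDegree P t).trans_lt hPd) hAP
  exact tendsto_nhds_unique hlim (tendsto_const_nhds.congr' (hzero.mono fun t ht => ht.symm))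
end

section
/- Let n ≥ 2 and 0 ≤ k ≤ n−1. For every polynomial f ∈ MvPolynomial (Fin n × Fin n) ℂ, if f vanishes at the complexification of every k-degenerate real symmetric matrix B ∈ Matrix (Fin n) (Fin n) ℝ (i.e., at the complex matrix with entries (algebraMap ℝ ℂ) (B i j)), then f vanishes at every k-degenerate complex symmetric matrix A ∈ Matrix (Fin n) (Fin n) ℂ. (I.e., the Zariski closure in Sym(n,ℂ) of the set of k-degenerate real symmetric matrices is the set of all k-degenerate complex symmetric matrices.) -/
open Matrix

namespace Deg

/-- Diagonalization of complex symmetric matrices by congruence. -/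
theorem congr_diag {ι : Type} [Fintype ι] [DecidableEq ι] (A : Matrix ι ι ℂ) (hA : Aᵀ = A) :
    ∃ (R P : Matrix ι ι ℂ) (w : ι → ℂ), R * P = 1 ∧ P * R = 1 ∧ A = R * diagonal w * Rᵀ := by
  have hs : LinearMap.IsSymm (Matrix.toBilin' A) := by
    constructor
    intro x y
    simp only [RingHom.id_apply, Matrix.toBilin'_apply']
    rw [dotProduct_comm, ← vecMul_transpose, hA, dotProduct_mulVec]
  obtain ⟨v, hv⟩ := LinearMap.BilinForm.exists_orthogonal_basis (B := Matrix.toBilin' A) hs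
  have hcard : Fintype.card (Fin (Module.finrank ℂ (ι → ℂ))) = Fintype.card ι := by simp
  let b := v.reindex (Fintype.equivOfCardEq hcard)
  have hb : ∀ i j, i ≠ j → b i ⬝ᵥ (A *ᵥ b j) = 0 := by
    intro i j hij
    have := hv (i := (Fintype.equivOfCardEq hcard).symm i)
      (j := (Fintype.equivOfCardEq hcard).symm j) (by simpa using hij)
    simpa [b, Function.onFun, Matrix.toBilin'_apply'] using this
  -- rows of M are the basis vectors
  let M : Matrix ι ι ℂ := Matrix.of fun i => b i
  have hM : IsUnit M := by
    rw [← Matrix.linearIndependent_rows_iff_isUnit]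
    exact b.linearIndependent
  have hdet := (Matrix.isUnit_iff_isUnit_det _).1 hM
  have hD : M * A * Mᵀ = diagonal (fun i => (M * A * Mᵀ) i i) := by
    ext i j
    by_cases h : i = j
    · subst h; simp
    · rw [diagonal_apply_ne _ h, Matrix.mul_assoc]
      have := hb i j h
      exact this
  refine ⟨M⁻¹, M, fun i => (M * A * Mᵀ) i i, nonsing_inv_mul _ hdet, mul_nonsing_inv _ hdet, ?_⟩
  rw [← hD, Matrix.transpose_nonsing_inv]
  have hdet' : IsUnit Mᵀ.det := by simpa using hdet
  rw [Matrix.mul_assoc, Matrix.mul_nonsing_inv_cancel_right _ _ hdet',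
    Matrix.nonsing_inv_mul_cancel_left _ _ hdet]

/-- Full rank factorization. -/
theorem factor {ι : Type} [Fintype ι] [DecidableEq ι] (A : Matrix ι ι ℂ) (hA : Aᵀ = A) :
    ∃ (κ : Type) (_ : Fintype κ) (_ : DecidableEq κ) (C L : Matrix ι κ ℂ),
      Cᵀ * L = 1 ∧ A = C * Cᵀ := by
  classical
  obtain ⟨R, P, w, hRP, hPR, h⟩ := congr_diag A hA
  have hsq : ∀ i, ∃ s : ℂ, s * s = w i := fun i => by
    obtain ⟨s, hs⟩ := IsAlgClosed.exists_pow_nat_eq (w i) (n := 2) (by norm_num)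
    exact ⟨s, by rw [← hs, sq]⟩
  choose s hs using hsq
  refine ⟨{i // s i ≠ 0}, inferInstance, inferInstance, Matrix.of fun i j => R i j * s j,
    Matrix.of fun i j => P j i * (s j)⁻¹, ?_, ?_⟩
  · ext i j
    have h1 : (P * R) j i = (1 : Matrix ι ι ℂ) j i := by rw [hPR]
    simp only [Matrix.mul_apply, transpose_apply, of_apply] at h1 ⊢
    calc ∑ x, R x i * s i * (P j x * (s j)⁻¹) = (∑ x, P j x * R x i) * (s i * (s j)⁻¹) := by
          rw [Finset.sum_mul]; refine Finset.sum_congr rfl fun x _ => by ring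
      _ = _ := by
          rw [h1]
          by_cases hij : i = j
          · subst hij; simp [i.2]
          · have : (j : ι) ≠ i := fun h => hij (Subtype.ext h.symm)
            simp [hij, this]
  · ext i j
    have e : ∀ x : ι, R i x * w x * R j x = R i x * s x * (R j x * s x) := fun x => by
      rw [← hs]; ring
    have e1 : A i j = ∑ x : ι, R i x * s x * (R j x * s x) := by
      rw [h, Matrix.mul_apply]
      refine Finset.sum_congr rfl fun x _ => ?_
      rw [Matrix.mul_diagonal, transpose_apply, e]
    rw [e1, Matrix.mul_apply]
    simp only [transpose_apply, of_apply]
    rw [← Fintype.sum_subtype_add_sum_subtype (fun i => s i ≠ 0)]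
    rw [add_eq_left]
    refine Finset.sum_eq_zero fun x _ => ?_
    have : s x = 0 := not_not.1 x.2
    simp [this]

/-- Completion of a complex orthonormal system. -/
theorem completion {ι κ : Type} [Fintype ι] [DecidableEq ι] [Fintype κ] [DecidableEq κ]
    (U : Matrix ι κ ℂ) (hU : Uᵀ * U = 1) :
    ∃ (κ' : Type) (_ : Fintype κ') (_ : DecidableEq κ') (V : Matrix ι κ' ℂ) (_ : ι ≃ κ ⊕ κ'),
      Vᵀ * V = 1 ∧ Uᵀ * V = 0 ∧ U * Uᵀ + V * Vᵀ = 1 := by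
  obtain ⟨κ', i1, i2, C, L, hL, hC⟩ := factor (1 - U * Uᵀ) (by simp)
  have hL' : Lᵀ * C = 1 := by
    have := congrArg Matrix.transpose hL
    simpa using this
  have hUC : Uᵀ * C = 0 := by
    have h1 : Uᵀ * (C * Cᵀ) * L = 0 := by
      rw [← hC, Matrix.mul_sub, ← Matrix.mul_assoc Uᵀ, hU]; simp
    rw [Matrix.mul_assoc, Matrix.mul_assoc, hL, Matrix.mul_one] at h1
    exact h1
  have hCU : Cᵀ * U = 0 := by
    have := congrArg Matrix.transpose hUC
    simpa using this
  have hCC : Cᵀ * C = 1 := by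
    have h1 : C * Cᵀ * C = C := by
      rw [← hC, Matrix.sub_mul, Matrix.mul_assoc U, hUC]; simp
    have h2 : Lᵀ * (C * Cᵀ * C) = Lᵀ * C := by rw [h1]
    rwa [Matrix.mul_assoc C, ← Matrix.mul_assoc Lᵀ, hL', Matrix.one_mul] at h2
  have hone : U * Uᵀ + C * Cᵀ = 1 := by rw [← hC]; abel
  have hcard : Fintype.card ι = Fintype.card (κ ⊕ κ') := by
    refine Matrix.square_of_invertible (fromCols U C) (fromRows Uᵀ Cᵀ) ?_ ?_
    · rw [fromCols_mul_fromRows, hone]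
    · rw [fromRows_mul_fromCols, hU, hCC, hUC, hCU, fromBlocks_one]
  exact ⟨κ', i1, i2, C, Fintype.equivOfCardEq hcard, hCC, hUC, hone⟩

section
attribute [local instance] Matrix.linftyOpNormedRing Matrix.linftyOpNormedAlgebra

theorem quad_solve {κ : Type} [Fintype κ] [DecidableEq κ] (G : Matrix κ κ ℂ) (hG : Gᵀ = G)
    (U : Set (Matrix κ κ ℂ)) (hU : U ∈ nhds (0 : Matrix κ κ ℂ)) :
    ∀ᶠ D in nhds (0 : Matrix κ κ ℂ), Dᵀ = D → ∃ Y ∈ U, Yᵀ = Y ∧ (2 : ℂ) • Y + Y * G * Y = D := by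
  let T : Matrix κ κ ℂ →L[ℂ] Matrix κ κ ℂ :=
    LinearMap.toContinuousLinearMap (Matrix.transposeLinearEquiv κ κ ℂ ℂ).toLinearMap
  have hT : ∀ Y, T Y = Yᵀ := fun Y => rfl
  have h1 : HasStrictFDerivAt (fun Y : Matrix κ κ ℂ => (2 : ℂ) • Y + T Y * (G * Y))
      ((2 : ℂ) • ContinuousLinearMap.id ℂ (Matrix κ κ ℂ)) 0 := by
    have h2 := ((hasStrictFDerivAt_id (𝕜 := ℂ) (0 : Matrix κ κ ℂ)).const_smul (2 : ℂ)).add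
      ((T.hasStrictFDerivAt (x := 0)).mul' ((hasStrictFDerivAt_id (𝕜 := ℂ) (0 : Matrix κ κ ℂ)).const_mul G))
    refine h2.congr_fderiv ?_
    ext1 Y
    have h0 : T 0 = 0 := map_zero T
    simp [h0]
    exact add_eq_left.2 (mul_zero (T Y))
  have h3 := h1.map_nhds_eq_of_surj (by
    rw [LinearMap.range_eq_top]
    intro Y
    exact ⟨(2 : ℂ)⁻¹ • Y, by simp⟩)
  have h4 : (fun Y : Matrix κ κ ℂ => (2 : ℂ) • Y + T Y * (G * Y)) '' U ∈
      nhds ((2 : ℂ) • (0 : Matrix κ κ ℂ) + T 0 * (G * 0)) := h3.ge (Filter.image_mem_map hU)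
  have h0 : (2 : ℂ) • (0 : Matrix κ κ ℂ) + T 0 * (G * 0) = 0 := by simp
  rw [h0] at h4
  filter_upwards [h4] with D hD hDs
  obtain ⟨Y, hY, h⟩ := hD
  simp only [hT] at h
  have hYs : Yᵀ = Y := by
    have h5 := congrArg Matrix.transpose h
    rw [hDs, ← h] at h5
    simp only [transpose_add, transpose_mul, transpose_smul, transpose_transpose, hG,
      Matrix.mul_assoc] at h5
    have h6 : (2 : ℂ) • Yᵀ = (2 : ℂ) • Y := by simpa using h5
    exact smul_right_injective _ (two_ne_zero) h6
  refine ⟨Y, hY, hYs, ?_⟩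
  rw [hYs] at h
  rw [Matrix.mul_assoc]; exact h
end

theorem lift_gram {ι κ : Type} [Fintype ι] [DecidableEq ι] [Fintype κ] [DecidableEq κ]
    (C L : Matrix ι κ ℂ) (hL : Cᵀ * L = 1) (U : Set (Matrix ι κ ℂ)) (hU : U ∈ nhds C) :
    ∀ᶠ S in nhds (Cᵀ * C), Sᵀ = S → ∃ C' ∈ U, C'ᵀ * C' = S := by
  have hL' : Lᵀ * C = 1 := by
    have := congrArg Matrix.transpose hL
    simpa using this
  have hc : Continuous fun Y : Matrix κ κ ℂ => C + L * Y := by fun_prop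
  have hU' : (fun Y : Matrix κ κ ℂ => C + L * Y) ⁻¹' U ∈ nhds (0 : Matrix κ κ ℂ) :=
    hc.continuousAt.preimage_mem_nhds (by simpa using hU)
  have h := quad_solve (Lᵀ * L) (by simp) _ hU'
  have hc2 : Continuous fun S : Matrix κ κ ℂ => S - Cᵀ * C := by fun_prop
  have ht : Filter.Tendsto (fun S : Matrix κ κ ℂ => S - Cᵀ * C) (nhds (Cᵀ * C)) (nhds 0) := by
    have := hc2.tendsto (Cᵀ * C)
    simpa using this
  filter_upwards [ht.eventually h] with S hS hSs
  obtain ⟨Y, hY, hYs, hq⟩ := hS (by simp [hSs])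
  refine ⟨_, hY, ?_⟩
  have e : (C + L * Y)ᵀ * (C + L * Y) = Cᵀ * C + (Cᵀ * L) * Y + Y * (Lᵀ * C) + Y * (Lᵀ * L) * Y := by
    simp only [transpose_add, transpose_mul, hYs, Matrix.add_mul, Matrix.mul_add, Matrix.mul_assoc]
    abel
  rw [e, hL, hL', Matrix.one_mul, Matrix.mul_one]
  have : S = Cᵀ * C + (S - Cᵀ * C) := by abel
  rw [this, ← hq, two_smul]; abel


/-- Orthogonally diagonalizable matrices with at most `d` eigenvalues. -/
def DD (ι : Type) [Fintype ι] [DecidableEq ι] (d : ℕ) : Set (Matrix ι ι ℂ) :=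
  {A | ∃ (Q : Matrix ι ι ℂ) (c : ι → Fin d) (m : Fin d → ℂ), Qᵀ * Q = 1 ∧
    A = Q * diagonal (fun i => m (c i)) * Qᵀ}

/-- Same as `DD` with nonzero eigenvalues. -/
def DDi (ι : Type) [Fintype ι] [DecidableEq ι] (d : ℕ) : Set (Matrix ι ι ℂ) :=
  {A | ∃ (Q : Matrix ι ι ℂ) (c : ι → Fin d) (m : Fin d → ℂ), (∀ j, m j ≠ 0) ∧ Qᵀ * Q = 1 ∧
    A = Q * diagonal (fun i => m (c i)) * Qᵀ}

theorem DD_subset (ι : Type) [Fintype ι] [DecidableEq ι] (d : ℕ) :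
    DD ι d ⊆ closure (DDi ι d) := by
  rintro A ⟨Q, c, m, hQ, rfl⟩
  let g : ℂ → Matrix ι ι ℂ := fun z => Q * diagonal (fun i => m (c i) + z) * Qᵀ
  have hg : Continuous g := by
    have : Continuous fun z : ℂ => diagonal (fun i => m (c i) + z) :=
      Continuous.matrix_diagonal (by fun_prop)
    fun_prop
  have hd : Dense ((Set.range fun j => - m j)ᶜ) :=
    (Set.finite_range _).countable.dense_compl ℂ
  have h0 := map_mem_closure hg (hd 0) (t := DDi ι d) (fun z hz => by
    refine ⟨Q, c, fun j => m j + z, fun j hj => hz ⟨j, ?_⟩, hQ, rfl⟩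
    show - m j = z
    linear_combination -hj)
  simpa [g] using h0

theorem step {ι κ : Type} [Fintype ι] [DecidableEq ι] [Fintype κ] [DecidableEq κ] {d : ℕ}
    (C : Matrix ι κ ℂ) (hC : Cᵀ * C ∈ DDi κ d) (l : ℂ) :
    C * Cᵀ + l • (1 : Matrix ι ι ℂ) ∈ DD ι (d + 1) := by
  obtain ⟨Q, c, m, hm, hQ, h⟩ := hC
  have hQ' : Q * Qᵀ = 1 := mul_eq_one_comm.1 hQ
  have hsq : ∀ i, ∃ s : ℂ, s * s = m i := fun i => by
    obtain ⟨s, hs⟩ := IsAlgClosed.exists_pow_nat_eq (m i) (n := 2) (by norm_num)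
    exact ⟨s, by rw [← hs, sq]⟩
  choose s hs using hsq
  have hs0 : ∀ j, s j ≠ 0 := fun j h0 => hm j (by rw [← hs, h0, zero_mul])
  let E : Matrix κ κ ℂ := diagonal fun i => (s (c i))⁻¹
  let D : Matrix κ κ ℂ := diagonal fun i => m (c i)
  have hE : Eᵀ = E := diagonal_transpose _
  have hEDE : E * D * E = 1 := by
    simp only [E, D, diagonal_mul_diagonal]
    rw [← diagonal_one]
    congr 1
    ext i
    rw [← hs]
    field_simp [hs0 (c i)]
  let U : Matrix ι κ ℂ := C * Q * E
  have hU : Uᵀ * U = 1 := by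
    calc Uᵀ * U = E * (Qᵀ * (Cᵀ * C) * Q) * E := by
          simp only [U, transpose_mul, hE, Matrix.mul_assoc]
      _ = E * ((Qᵀ * Q) * D * (Qᵀ * Q)) * E := by rw [h]; simp only [D, Matrix.mul_assoc]
      _ = 1 := by rw [hQ, Matrix.one_mul, Matrix.mul_one, hEDE]
  have hUD : U * D * Uᵀ = C * Cᵀ := by
    calc U * D * Uᵀ = C * Q * (E * D * E) * (Qᵀ * Cᵀ) := by
          simp only [U, transpose_mul, hE, Matrix.mul_assoc]
      _ = C * (Q * Qᵀ) * Cᵀ := by rw [hEDE]; simp only [Matrix.mul_assoc, Matrix.mul_one]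
      _ = _ := by rw [hQ', Matrix.mul_one]
  obtain ⟨κ', i1, i2, V, e, hV, hUV, hone⟩ := completion U hU
  have hVU : Vᵀ * U = 0 := by
    have := congrArg Matrix.transpose hUV
    simpa using this
  let W : Matrix ι (κ ⊕ κ') ℂ := fromCols U V
  let c' : κ ⊕ κ' → Fin (d + 1) := Sum.elim (fun k => (c k).castSucc) (fun _ => Fin.last d)
  let m' : Fin (d + 1) → ℂ := Fin.snoc (fun j => m j + l) l
  have hW : Wᵀ * W = 1 := by
    rw [transpose_fromCols, fromRows_mul_fromCols, hU, hV, hUV, hVU, fromBlocks_one]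
  refine ⟨W.submatrix id e, fun i => c' (e i), m', ?_, ?_⟩
  · rw [transpose_submatrix, ← submatrix_mul _ _ _ _ _ Function.bijective_id, hW]
    exact submatrix_one_equiv e
  · have hd : diagonal (fun i => m' (c' (e i))) = (diagonal fun i => m' (c' i)).submatrix e e := by
      rw [submatrix_diagonal_equiv]; rfl
    rw [hd, transpose_submatrix, ← submatrix_mul _ _ _ _ _ e.bijective,
      ← submatrix_mul _ _ _ _ _ e.bijective, submatrix_id_id]
    have hd2 : (diagonal fun i => m' (c' i)) =
        fromBlocks (D + l • 1) 0 0 (l • (1 : Matrix κ' κ' ℂ)) := by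
      rw [smul_one_eq_diagonal, smul_one_eq_diagonal]
      simp only [D, diagonal_add]
      rw [fromBlocks_diagonal]
      congr 1
      ext i
      rcases i with i | i <;> simp [m', c']
    rw [hd2, transpose_fromCols, fromCols_mul_fromBlocks, fromCols_mul_fromRows, ← hUD, ← hone]
    simp [Matrix.mul_add, Matrix.add_mul]
    abel

theorem aeval_comm {F ι κ : Type} [Field F] [Fintype ι] [DecidableEq ι] [Fintype κ]
    [DecidableEq κ] (C : Matrix ι κ F) (E : Matrix κ ι F) (q : Polynomial F) :
    C * Polynomial.aeval (E * C) q = Polynomial.aeval (C * E) q * C := by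
  induction q using Polynomial.induction_on' with
  | add p q hp hq => simp [Matrix.mul_add, Matrix.add_mul, hp, hq]
  | monomial k a =>
    have : C * (E * C) ^ k = (C * E) ^ k * C := by
      induction k with
      | zero => simp
      | succ k ih => rw [pow_succ, pow_succ, ← Matrix.mul_assoc, ih]; simp only [Matrix.mul_assoc]
    simp [Polynomial.aeval_monomial, Algebra.algebraMap_eq_smul_one, this]

theorem DD_symm {ι : Type} [Fintype ι] [DecidableEq ι] {d : ℕ} {A : Matrix ι ι ℂ}
    (hA : A ∈ DDi ι d) : Aᵀ = A := by
  obtain ⟨Q, c, m, -, -, rfl⟩ := hA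
  simp [Matrix.mul_assoc]

theorem main (d : ℕ) : ∀ (ι : Type) [Fintype ι] [DecidableEq ι] (A : Matrix ι ι ℂ), Aᵀ = A →
    ∀ p : Polynomial ℂ, p ≠ 0 → p.natDegree ≤ d → Polynomial.aeval A p = 0 →
    A ∈ closure (DD ι d) := by
  induction d with
  | zero =>
    intro ι _ _ A hA p hp hd h
    rw [Polynomial.eq_C_of_natDegree_le_zero hd] at h hp
    have h1 : (1 : Matrix ι ι ℂ) = 0 := by
      have h2 : p.coeff 0 ≠ 0 := by simpa using hp
      rw [Polynomial.aeval_C, Algebra.algebraMap_eq_smul_one] at h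
      exact (smul_eq_zero.1 h).resolve_left h2
    have : IsEmpty ι := ⟨fun i => by simpa using congrFun (congrFun h1 i) i⟩
    exact subset_closure ⟨1, isEmptyElim, 0, by simp, Subsingleton.elim _ _⟩
  | succ d ih =>
    intro ι _ _ A hA p hp hd h
    obtain ⟨l, q, hq0, hqd, hq⟩ : ∃ (l : ℂ) (q : Polynomial ℂ), q ≠ 0 ∧ q.natDegree ≤ d ∧
        (A - l • 1) * Polynomial.aeval A q = 0 := by
      by_cases hdeg : p.natDegree = 0
      · refine ⟨0, p, hp, by omega, by rw [h, mul_zero]⟩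
      · obtain ⟨l, hl⟩ := IsAlgClosed.exists_root p
          (fun h0 => hdeg (Polynomial.natDegree_eq_zero_iff_degree_le_zero.2 h0.le))
        obtain ⟨q, rfl⟩ := Polynomial.dvd_iff_isRoot.2 hl
        have hq0 : q ≠ 0 := right_ne_zero_of_mul hp
        refine ⟨l, q, hq0, ?_, ?_⟩
        · rw [Polynomial.natDegree_mul (Polynomial.X_sub_C_ne_zero l) hq0,
            Polynomial.natDegree_X_sub_C] at hd
          omega
        · simpa [Algebra.algebraMap_eq_smul_one] using h
    obtain ⟨κ, i1, i2, C, L, hL, hC⟩ := factor (A - l • 1) (by simp [hA])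
    have hL' : Lᵀ * C = 1 := by
      have := congrArg Matrix.transpose hL
      simpa using this
    have hA1 : A = C * Cᵀ + l • 1 := by rw [← hC]; abel
    let q' := q.comp (Polynomial.X + Polynomial.C l)
    have hq' : Polynomial.aeval (Cᵀ * C) q' = 0 := by
      have e1 : Polynomial.aeval (C * Cᵀ) q' = Polynomial.aeval A q := by
        rw [Polynomial.aeval_comp, hA1]
        simp [Algebra.algebraMap_eq_smul_one]
      have e2 : C * Polynomial.aeval (Cᵀ * C) q' * Cᵀ = 0 := by
        rw [aeval_comm, e1, Matrix.mul_assoc, ← hC, ← hq]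
        have : Commute A (Polynomial.aeval A q) := by
          have e : Polynomial.aeval A (Polynomial.X * q) =
            Polynomial.aeval A (q * Polynomial.X) := by rw [mul_comm]
          rw [commute_iff_eq]
          simpa using e
        rw [Matrix.mul_sub, Matrix.sub_mul, this.eq]
        simp
      have e3 : Lᵀ * (C * Polynomial.aeval (Cᵀ * C) q' * Cᵀ) * L = 0 := by rw [e2]; simp
      have e4 : Lᵀ * (C * Polynomial.aeval (Cᵀ * C) q' * Cᵀ) * L =
          (Lᵀ * C) * Polynomial.aeval (Cᵀ * C) q' * (Cᵀ * L) := by simp only [Matrix.mul_assoc]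
      rw [e4, hL, hL', Matrix.one_mul, Matrix.mul_one] at e3
      exact e3
    have hq'0 : q' ≠ 0 := by
      intro h0
      have : q'.comp (Polynomial.X - Polynomial.C l) = q := by
        simp [q', Polynomial.comp_assoc]
      rw [h0] at this
      exact hq0 (by simpa using this.symm)
    have hq'd : q'.natDegree ≤ d := by
      simpa [q', Polynomial.natDegree_comp] using hqd
    have hcl := ih κ (Cᵀ * C) (by simp) q' hq'0 hq'd hq'
    have hcl' : Cᵀ * C ∈ closure (DDi κ d) := by
      have := closure_mono (DD_subset κ d) hcl
      rwa [closure_closure] at this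
    rw [mem_closure_iff_nhds]
    intro O hO
    have hc : Continuous fun Y : Matrix ι κ ℂ => Y * Yᵀ + l • (1 : Matrix ι ι ℂ) := by fun_prop
    have hO' : (fun Y : Matrix ι κ ℂ => Y * Yᵀ + l • (1 : Matrix ι ι ℂ)) ⁻¹' O ∈ nhds C :=
      hc.continuousAt.preimage_mem_nhds (by rw [← hA1]; exact hO)
    have hev := lift_gram C L hL _ hO'
    obtain ⟨S, hS1, hS2⟩ := mem_closure_iff_nhds.1 hcl' _ hev
    obtain ⟨C', hC', hCS⟩ := hS1 (DD_symm hS2)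
    exact ⟨_, hC', step C' (hCS ▸ hS2) l⟩


theorem exists_sign {ι : Type} [Fintype ι] [DecidableEq ι] (M : Matrix ι ι ℂ) :
    ∃ e : ι → ℂ, (∀ i, e i * e i = 1) ∧ (M + diagonal e).det ≠ 0 := by
  have key : ∀ s : Finset ι, ∃ e : ι → ℂ, (∀ i ∈ s, e i * e i = 1) ∧ (M + diagonal e).det ≠ 0 := by
    intro s
    induction s using Finset.induction_on with
    | empty =>
      have h0 : (-M).charpoly ≠ 0 := (Matrix.charpoly_monic _).ne_zero
      obtain ⟨t, ht⟩ : ∃ t, (-M).charpoly.eval t ≠ 0 := by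
        by_contra! hc
        exact h0 (Polynomial.funext (by simpa using hc))
      refine ⟨fun _ => t, by simp, ?_⟩
      rw [Matrix.eval_charpoly] at ht
      convert ht using 2
      rw [sub_neg_eq_add, add_comm]
      rfl
    | insert a s ha ih =>
      obtain ⟨e, he, hdet⟩ := ih
      have hrow : ∀ x, M + diagonal (Function.update e a x) =
          updateRow (M + diagonal e) a (M a + x • Pi.single a 1) := by
        intro x
        ext i j
        by_cases hi : i = a
        · subst hi
          by_cases hj : i = j
          · subst hj; simp
          · have : j ≠ i := fun h => hj h.symm
            simp [diagonal_apply_ne _ hj, this]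
        · rw [updateRow_ne hi]
          by_cases hj : i = j
          · subst hj; simp [hi]
          · simp [diagonal_apply_ne _ hj]
      have haff : ∀ x, (M + diagonal (Function.update e a x)).det =
          (updateRow (M + diagonal e) a (M a)).det +
            x * (updateRow (M + diagonal e) a (Pi.single a 1)).det := by
        intro x
        rw [hrow, det_updateRow_add, det_updateRow_smul]
      have hmem : ∀ x : ℂ, x * x = 1 → ∀ i ∈ insert a s,
          Function.update e a x i * Function.update e a x i = 1 := by
        intro x hx i hi
        by_cases h : i = a
        · subst h; simpa using hx
        · rw [Function.update_of_ne h]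
          exact he i ((Finset.mem_insert.1 hi).resolve_left h)
      by_cases h1 : (M + diagonal (Function.update e a 1)).det = 0
      · by_cases h2 : (M + diagonal (Function.update e a (-1))).det = 0
        · exfalso
          apply hdet
          have h3 := haff (e a)
          rw [Function.update_eq_self] at h3
          rw [haff] at h1 h2
          rw [h3]
          linear_combination (1 + e a) / 2 * h1 + (1 - e a) / 2 * h2
        · exact ⟨_, hmem (-1) (by norm_num), h2⟩
      · exact ⟨_, hmem 1 (by norm_num), h1⟩
  obtain ⟨e, he, h⟩ := key Finset.univ
  exact ⟨e, fun i => he i (Finset.mem_univ i), h⟩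

theorem cayley {ι : Type} [Fintype ι] [DecidableEq ι] (Q : Matrix ι ι ℂ) (hQ : Qᵀ * Q = 1) :
    ∃ (K : Matrix ι ι ℂ) (e : ι → ℂ), Kᵀ = -K ∧ (1 + K).det ≠ 0 ∧ (∀ i, e i * e i = 1) ∧
      Q * diagonal e = (1 - K) * (1 + K)⁻¹ := by
  obtain ⟨e, he, hdet⟩ := exists_sign Q
  have hee : diagonal e * diagonal e = 1 := by
    rw [diagonal_mul_diagonal, ← diagonal_one]; congr 1; ext i; exact he i
  set Q' := Q * diagonal e with hQ'
  have hQ'o : Q'ᵀ * Q' = 1 := by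
    rw [hQ', transpose_mul, diagonal_transpose, Matrix.mul_assoc, ← Matrix.mul_assoc Qᵀ, hQ,
      Matrix.one_mul, hee]
  have hN : IsUnit (1 + Q').det := by
    have : 1 + Q' = (Q + diagonal e) * diagonal e := by
      rw [Matrix.add_mul, hee, add_comm]
    rw [this, det_mul, isUnit_iff_ne_zero]
    refine mul_ne_zero hdet ?_
    intro h0
    have := congrArg Matrix.det hee
    simp only [det_mul, h0, det_one, mul_zero] at this
    exact zero_ne_one this
  obtain ⟨K, hK⟩ : ∃ K, K * (1 + Q') = 1 - Q' :=
    ⟨(1 - Q') * (1 + Q')⁻¹, Matrix.nonsing_inv_mul_cancel_right _ _ hN⟩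
  have hKt : (1 + Q'ᵀ) * Kᵀ = 1 - Q'ᵀ := by
    have := congrArg Matrix.transpose hK
    simpa using this
  have hNt : IsUnit (1 + Q'ᵀ).det := by
    have : 1 + Q'ᵀ = (1 + Q')ᵀ := by simp
    rw [this, det_transpose]; exact hN
  have h2 : (1 + K) * ((2 : ℂ)⁻¹ • (1 + Q')) = 1 := by
    rw [Matrix.mul_smul, Matrix.add_mul, hK, Matrix.one_mul]
    rw [show 1 + Q' + (1 - Q') = (2 : ℂ) • (1 : Matrix ι ι ℂ) by rw [two_smul]; abel, smul_smul]
    norm_num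
  have hskew : Kᵀ + K = 0 := by
    have h3 : (1 + Q'ᵀ) * (Kᵀ + K) * (1 + Q') = 0 := by
      rw [Matrix.mul_add (1 + Q'ᵀ) Kᵀ K, hKt, Matrix.add_mul (1 - Q'ᵀ), Matrix.mul_assoc _ K, hK]
      simp only [Matrix.add_mul, Matrix.mul_add, Matrix.sub_mul, Matrix.mul_sub, hQ'o,
        Matrix.one_mul, Matrix.mul_one]
      abel
    have h4 : (1 + Q'ᵀ)⁻¹ * ((1 + Q'ᵀ) * (Kᵀ + K) * (1 + Q')) * (1 + Q')⁻¹ = 0 := by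
      rw [h3]; simp
    rwa [Matrix.mul_assoc (1 + Q'ᵀ), Matrix.nonsing_inv_mul_cancel_left _ _ hNt,
      Matrix.mul_nonsing_inv_cancel_right _ _ hN] at h4
  refine ⟨K, e, eq_neg_of_add_eq_zero_left hskew, ?_, he, ?_⟩
  · intro h0
    have := congrArg Matrix.det h2
    rw [det_mul, h0, zero_mul, det_one] at this
    exact zero_ne_one this
  · rw [Matrix.inv_eq_right_inv h2, Matrix.mul_smul, Matrix.sub_mul, hK, Matrix.one_mul]
    rw [show 1 + Q' - (1 - Q') = (2 : ℂ) • Q' by rw [two_smul]; abel, smul_smul]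
    norm_num [hQ']

theorem real_skew_det {ι : Type} [Fintype ι] [DecidableEq ι] (K : Matrix ι ι ℝ) (hK : Kᵀ = -K) :
    (1 + K).det ≠ 0 := by
  intro h
  obtain ⟨v, hv, h0⟩ := Matrix.exists_mulVec_eq_zero_iff.2 h
  rw [Matrix.add_mulVec, Matrix.one_mulVec] at h0
  have h1 : v ⬝ᵥ (K *ᵥ v) = 0 := by
    have h2 : v ⬝ᵥ (K *ᵥ v) = - (v ⬝ᵥ (K *ᵥ v)) := by
      conv_lhs => rw [dotProduct_comm, ← vecMul_transpose, hK, ← dotProduct_mulVec]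
      simp [Matrix.neg_mulVec]
    linarith
  have h3 : v ⬝ᵥ v = 0 := by
    have := congrArg (fun u => v ⬝ᵥ u) h0
    simpa [dotProduct_add, h1] using this
  exact hv (dotProduct_self_eq_zero.1 h3)

theorem real_cayley_orth {ι : Type} [Fintype ι] [DecidableEq ι] (K : Matrix ι ι ℝ)
    (hK : Kᵀ = -K) : ((1 - K) * (1 + K)⁻¹)ᵀ * ((1 - K) * (1 + K)⁻¹) = 1 := by
  have h1 : IsUnit (1 + K).det := isUnit_iff_ne_zero.2 (real_skew_det K hK)
  have ht : (1 + K)ᵀ = 1 - K := by simp [hK, sub_eq_add_neg]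
  have ht' : (1 - K)ᵀ = 1 + K := by simp [hK]
  have h2 : IsUnit (1 - K).det := by rw [← ht, det_transpose]; exact h1
  rw [transpose_mul, transpose_nonsing_inv, ht, ht']
  have hc : (1 + K) * (1 - K) = (1 - K) * (1 + K) := by
    simp only [Matrix.add_mul, Matrix.mul_add, Matrix.sub_mul, Matrix.mul_sub,
        Matrix.one_mul, Matrix.mul_one]
    abel
  calc (1 - K)⁻¹ * (1 + K) * ((1 - K) * (1 + K)⁻¹)
      = (1 - K)⁻¹ * ((1 + K) * (1 - K)) * (1 + K)⁻¹ := by simp only [Matrix.mul_assoc]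
    _ = 1 := by
      rw [hc, Matrix.nonsing_inv_mul_cancel_left _ _ h2, Matrix.mul_nonsing_inv _ h1]

theorem not_linInd_of_aeval {F ι : Type} [Field F] [Fintype ι] [DecidableEq ι] (M : Matrix ι ι F)
    (d : ℕ) (p : Polynomial F) (hp : p ≠ 0) (hd : p.natDegree ≤ d)
    (h : Polynomial.aeval M p = 0) :
    ¬ LinearIndependent F (fun r : Fin (d + 1) => M ^ (r : ℕ)) := by
  rw [Fintype.not_linearIndependent_iff]
  refine ⟨fun i => p.coeff i, ?_, ⟨⟨p.natDegree, by omega⟩, ?_⟩⟩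
  · rw [Polynomial.aeval_eq_sum_range' (Nat.lt_succ_of_le hd), Finset.sum_range] at h
    exact h
  · simpa using hp

theorem aeval_of_not_linInd {F ι : Type} [Field F] [Fintype ι] [DecidableEq ι] (M : Matrix ι ι F)
    (d : ℕ) (h : ¬ LinearIndependent F (fun r : Fin (d + 1) => M ^ (r : ℕ))) :
    ∃ p : Polynomial F, p ≠ 0 ∧ p.natDegree ≤ d ∧ Polynomial.aeval M p = 0 := by
  rw [Fintype.not_linearIndependent_iff] at h
  obtain ⟨g, hg, i, hi⟩ := h
  refine ⟨∑ i : Fin (d + 1), Polynomial.monomial i (g i), ?_, ?_, ?_⟩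
  · intro h0
    have := congrArg (fun q => q.coeff i) h0
    simp [Polynomial.coeff_monomial, Fin.val_inj] at this
    exact hi this
  · refine Polynomial.natDegree_sum_le_of_forall_le _ _ fun j _ => ?_
    exact (Polynomial.natDegree_monomial_le _).trans (by omega)
  · rw [map_sum]
    rw [← hg]
    refine Finset.sum_congr rfl fun j _ => ?_
    rw [Polynomial.aeval_monomial, Algebra.algebraMap_eq_smul_one, smul_mul_assoc, one_mul]

theorem aeval_diag {F ι : Type} [Field F] [Fintype ι] [DecidableEq ι] (v : ι → F)
    (p : Polynomial F) :
    Polynomial.aeval (diagonal v) p = diagonal (fun i => p.eval (v i)) := by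
  induction p using Polynomial.induction_on' with
  | add p q hp hq => simp [hp, hq]
  | monomial k a =>
    rw [Polynomial.aeval_monomial, Algebra.algebraMap_eq_smul_one, smul_mul_assoc, one_mul,
      diagonal_pow, ← diagonal_smul]
    congr 1
    ext i
    simp

theorem real_degenerate {ι : Type} [Fintype ι] [DecidableEq ι] {d : ℕ} (Q : Matrix ι ι ℝ)
    (hQ : Qᵀ * Q = 1) (c : ι → Fin d) (m : Fin d → ℝ) :
    ¬ LinearIndependent ℝ (fun r : Fin (d + 1) =>
      (Q * diagonal (fun i => m (c i)) * Qᵀ) ^ (r : ℕ)) := by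
  have hQ' : Q * Qᵀ = 1 := mul_eq_one_comm.1 hQ
  let p : Polynomial ℝ := ∏ j, (Polynomial.X - Polynomial.C (m j))
  refine not_linInd_of_aeval _ d p (Polynomial.monic_prod_X_sub_C m Finset.univ).ne_zero ?_ ?_
  · simp [p]
  · have h := aeval_comm Q (diagonal (fun i => m (c i)) * Qᵀ) p
    rw [Matrix.mul_assoc _ Qᵀ, hQ, Matrix.mul_one, aeval_diag] at h
    have h0 : (fun i => p.eval (m (c i))) = 0 := by
      ext i
      simp only [p, Polynomial.eval_prod]
      exact Finset.prod_eq_zero (Finset.mem_univ (c i)) (by simp)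
    rw [h0] at h
    have h1 : Polynomial.aeval (Q * (diagonal (fun i => m (c i)) * Qᵀ)) p * Q * Qᵀ = 0 := by
      rw [← h]; simp
    rw [Matrix.mul_assoc _ Q Qᵀ, hQ', Matrix.mul_one, ← Matrix.mul_assoc] at h1
    exact h1

theorem diff_eval {σ : Type} (f : MvPolynomial σ ℂ) (g : ℂ → σ → ℂ) (U : Set ℂ)
    (hg : ∀ i, DifferentiableOn ℂ (fun z => g z i) U) :
    DifferentiableOn ℂ (fun z => MvPolynomial.eval (g z) f) U := by
  induction f using MvPolynomial.induction_on with
  | C a => simp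
  | add p q hp hq => simp only [map_add]; exact hp.add hq
  | mul_X p i hp => simp only [map_mul, MvPolynomial.eval_X]; exact hp.mul (hg i)

theorem diff_det {ι : Type} [Fintype ι] [DecidableEq ι] (M : ℂ → Matrix ι ι ℂ) (U : Set ℂ)
    (hM : ∀ i j, DifferentiableOn ℂ (fun z => M z i j) U) :
    DifferentiableOn ℂ (fun z => (M z).det) U := by
  simp only [Matrix.det_apply]
  refine DifferentiableOn.fun_sum fun s _ => DifferentiableOn.const_smul ?_ _
  exact DifferentiableOn.fun_finsetProd fun i _ => hM _ _

theorem diff_inv {ι : Type} [Fintype ι] [DecidableEq ι] (M : ℂ → Matrix ι ι ℂ) (U : Set ℂ)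
    (hM : ∀ i j, DifferentiableOn ℂ (fun z => M z i j) U) (h0 : ∀ z ∈ U, (M z).det ≠ 0) (i j : ι) :
    DifferentiableOn ℂ (fun z => (M z)⁻¹ i j) U := by
  simp only [Matrix.inv_def, Ring.inverse_eq_inv', Matrix.smul_apply, smul_eq_mul,
    Matrix.adjugate_apply]
  refine DifferentiableOn.mul ((diff_det M U hM).inv h0) (diff_det _ U ?_)
  intro a b
  by_cases h : a = j
  · subst h; simp
  · simp only [updateRow_ne h]; exact hM a b

theorem diff_mul {ι : Type} [Fintype ι] (M N : ℂ → Matrix ι ι ℂ) (U : Set ℂ)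
    (hM : ∀ i j, DifferentiableOn ℂ (fun z => M z i j) U)
    (hN : ∀ i j, DifferentiableOn ℂ (fun z => N z i j) U) (i j : ι) :
    DifferentiableOn ℂ (fun z => (M z * N z) i j) U := by
  simp only [Matrix.mul_apply]
  exact DifferentiableOn.fun_sum fun k _ => (hM i k).mul (hN k j)

theorem density {n d : ℕ} (f : MvPolynomial (Fin n × Fin n) ℂ)
    (hvan : ∀ B : Matrix (Fin n) (Fin n) ℝ, Bᵀ = B →
      ¬ LinearIndependent ℝ (fun r : Fin (d + 1) => B ^ (r : ℕ)) →
      MvPolynomial.eval (fun p => algebraMap ℝ ℂ (B p.1 p.2)) f = 0)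
    (A : Matrix (Fin n) (Fin n) ℂ) (hA : A ∈ DD (Fin n) d) :
    MvPolynomial.eval (fun p => A p.1 p.2) f = 0 := by
  obtain ⟨Q, c, m, hQ, rfl⟩ := hA
  obtain ⟨K, e, hK, hdet, he, hQe⟩ := cayley Q hQ
  let φ : Matrix (Fin n) (Fin n) ℝ →+* Matrix (Fin n) (Fin n) ℂ := (algebraMap ℝ ℂ).mapMatrix
  let K0 : Matrix (Fin n) (Fin n) ℝ := K.map Complex.re
  let K1 : Matrix (Fin n) (Fin n) ℝ := K.map Complex.im
  have hK0 : K0ᵀ = -K0 := by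
    ext i j
    have := congrFun (congrFun hK i) j
    simp only [transpose_apply, neg_apply] at this
    simp [K0, this]
  have hK1 : K1ᵀ = -K1 := by
    ext i j
    have := congrFun (congrFun hK i) j
    simp only [transpose_apply, neg_apply] at this
    simp [K1, this]
  let Kz : ℂ → Matrix (Fin n) (Fin n) ℂ := fun z => φ K0 + z • φ K1
  let mz : ℂ → Fin d → ℂ := fun z j => (m j).re + z * (m j).im
  let Qz : ℂ → Matrix (Fin n) (Fin n) ℂ := fun z => (1 - Kz z) * (1 + Kz z)⁻¹
  let Az : ℂ → Matrix (Fin n) (Fin n) ℂ := fun z =>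
    Qz z * diagonal (fun i => mz z (c i)) * (Qz z)ᵀ
  have hKI : Kz Complex.I = K := by
    ext i j
    simp [Kz, φ, K0, K1, mul_comm Complex.I, Complex.re_add_im]
  have hmI : mz Complex.I = m := by
    ext j
    simp [mz, mul_comm Complex.I, Complex.re_add_im]
  have hAI : Az Complex.I = Q * diagonal (fun i => m (c i)) * Qᵀ := by
    simp only [Az, Qz, hKI, hmI]
    rw [← hQe, transpose_mul, diagonal_transpose]
    have : diagonal e * diagonal (fun i => m (c i)) * diagonal e = diagonal (fun i => m (c i)) := by
      rw [diagonal_mul_diagonal, diagonal_mul_diagonal]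
      congr 1; ext i; linear_combination m (c i) * he i
    calc Q * diagonal e * diagonal (fun i => m (c i)) * (diagonal e * Qᵀ)
        = Q * (diagonal e * diagonal (fun i => m (c i)) * diagonal e) * Qᵀ := by
          simp only [Matrix.mul_assoc]
      _ = _ := by rw [this]
  let U : Set ℂ := {z | (1 + Kz z).det ≠ 0}
  let h : ℂ → ℂ := fun z => MvPolynomial.eval (fun p => Az z p.1 p.2) f
  -- real parameters
  have hreal : ∀ x : ℝ, (x : ℂ) ∈ U ∧ h x = 0 := by
    intro x
    let Kr : Matrix (Fin n) (Fin n) ℝ := K0 + x • K1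
    have hKr : Krᵀ = -Kr := by simp [Kr, hK0, hK1, add_comm]
    have hKφ : φ Kr = Kz x := by
      ext i j; simp [Kr, Kz, φ]
    have hd0 := real_skew_det Kr hKr
    have hd1 : (1 + Kz x) = φ (1 + Kr) := by rw [map_add, map_one, hKφ]
    have hU : (1 + Kz x).det ≠ 0 := by
      rw [hd1, show (φ (1 + Kr)).det = algebraMap ℝ ℂ (1 + Kr).det from
        ((algebraMap ℝ ℂ).map_det _).symm]
      simpa using hd0
    refine ⟨hU, ?_⟩
    let Qr := (1 - Kr) * (1 + Kr)⁻¹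
    have hQr : Qrᵀ * Qr = 1 := real_cayley_orth Kr hKr
    have hQφ : φ Qr = Qz x := by
      have h1 : Qr * (1 + Kr) = 1 - Kr :=
        Matrix.nonsing_inv_mul_cancel_right _ _ (isUnit_iff_ne_zero.2 hd0)
      have h2 := congrArg φ h1
      rw [map_mul, ← hd1, map_sub, map_one, hKφ] at h2
      show _ = (1 - Kz x) * (1 + Kz x)⁻¹
      rw [← h2, Matrix.mul_nonsing_inv_cancel_right _ _ (isUnit_iff_ne_zero.2 hU)]
    let mr : Fin d → ℝ := fun j => (m j).re + x * (m j).im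
    have hv := hvan (Qr * diagonal (fun i => mr (c i)) * Qrᵀ) (by simp [Matrix.mul_assoc])
      (real_degenerate Qr hQr c mr)
    have hAφ : φ (Qr * diagonal (fun i => mr (c i)) * Qrᵀ) = Az x := by
      have hφt : φ Qrᵀ = (φ Qr)ᵀ := rfl
      have hφd : φ (diagonal (fun i => mr (c i))) = diagonal (fun i => mz x (c i)) := by
        simp only [φ, RingHom.mapMatrix_apply]
        rw [diagonal_map (map_zero _)]
        congr 1; ext i; simp [mr, mz]
      rw [map_mul, map_mul, hφt, hφd, hQφ]
    show MvPolynomial.eval (fun p => Az x p.1 p.2) f = 0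
    rw [← hAφ]
    exact hv
  have hKd : ∀ i j, Differentiable ℂ (fun z => Kz z i j) := by
    intro i j
    simp only [Kz, Matrix.add_apply, Matrix.smul_apply, smul_eq_mul]
    fun_prop
  have hK1d : ∀ i j, Differentiable ℂ (fun z => (1 + Kz z) i j) := fun i j => by
    simp only [Matrix.add_apply]; exact (hKd i j).const_add _
  have hK2d : ∀ i j, Differentiable ℂ (fun z => (1 - Kz z) i j) := fun i j => by
    simp only [Matrix.sub_apply]; exact (hKd i j).const_sub _
  have hdetd : Differentiable ℂ (fun z => (1 + Kz z).det) := by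
    rw [← differentiableOn_univ]
    exact diff_det _ _ fun i j => (hK1d i j).differentiableOn
  have hUo : IsOpen U := isOpen_ne_fun hdetd.continuous continuous_const
  have hQd : ∀ i j, DifferentiableOn ℂ (fun z => Qz z i j) U :=
    diff_mul _ _ U (fun i j => (hK2d i j).differentiableOn)
      (diff_inv _ U (fun i j => (hK1d i j).differentiableOn) fun z hz => hz)
  have hAd : ∀ i j, DifferentiableOn ℂ (fun z => Az z i j) U := by
    refine diff_mul _ _ U (diff_mul _ _ U hQd ?_) (fun i j => hQd j i)
    intro i j
    by_cases hij : i = j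
    · subst hij
      simp only [diagonal_apply_eq, mz]
      fun_prop
    · simp [diagonal_apply_ne _ hij]
  have hh : AnalyticOnNhd ℂ h U :=
    (diff_eval f _ U fun p => hAd p.1 p.2).analyticOnNhd hUo
  have hconn : IsPreconnected U := by
    let P : Polynomial ℂ := ((1 + φ K0).map Polynomial.C +
      (Polynomial.X : Polynomial ℂ) • (φ K1).map Polynomial.C).det
    have hP : ∀ z, P.eval z = (1 + Kz z).det := by
      intro z
      rw [← Polynomial.coe_evalRingHom, RingHom.map_det]
      congr 1
      ext i j
      simp [Kz, add_assoc, mul_comm z]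
    have hP0 : P ≠ 0 := by
      intro h0
      have := (hreal 0).1
      apply this
      rw [← hP, h0, Polynomial.eval_zero]
    have hc : Set.Countable Uᶜ := by
      refine (P.roots.toFinset.finite_toSet.countable).mono fun z hz => ?_
      have : (1 + Kz z).det = 0 := not_not.1 hz
      simp [hP0, hP, this]
    have := (hc.isPathConnected_compl_of_one_lt_rank (by simp)).isConnected.isPreconnected
    rwa [compl_compl] at this
  have hfreq : ∃ᶠ z in nhdsWithin (0 : ℂ) {0}ᶜ, h z = 0 := by
    have ht : Filter.Tendsto (fun x : ℝ => (x : ℂ)) (nhdsWithin 0 {0}ᶜ) (nhdsWithin 0 {0}ᶜ) := by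
      refine tendsto_nhdsWithin_iff.2 ⟨?_, ?_⟩
      · have := Complex.continuous_ofReal.tendsto 0
        simp only [Complex.ofReal_zero] at this
        exact this.mono_left nhdsWithin_le_nhds
      · filter_upwards [self_mem_nhdsWithin] with x hx
        simpa using hx
    exact ht.frequently (Filter.Frequently.of_forall fun x => (hreal x).2)
  have hfin := hh.eqOn_zero_of_preconnected_of_frequently_eq_zero hconn
    (by simpa using (hreal 0).1) hfreq
  have hI : Complex.I ∈ U := by
    show (1 + Kz Complex.I).det ≠ 0
    rw [hKI]; exact hdet
  have := hfin hI
  simp only [h, hAI] at this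
  exact this

end Deg

/-- The Zariski closure in `Sym(n,ℂ)` of the set of `k`-degenerate real symmetric
matrices is the set of all `k`-degenerate complex symmetric matrices. -/
theorem stmt_3 (n k : ℕ) (hn : 2 ≤ n) (hk : k ≤ n - 1)
    (f : MvPolynomial (Fin n × Fin n) ℂ)
    (hvan : ∀ B : Matrix (Fin n) (Fin n) ℝ, Bᵀ = B →
      ¬ LinearIndependent ℝ (fun r : Fin (n - k + 1) => B ^ (r : ℕ)) →
      MvPolynomial.eval (fun p => algebraMap ℝ ℂ (B p.1 p.2)) f = 0) :
    ∀ A : Matrix (Fin n) (Fin n) ℂ, Aᵀ = A →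
      ¬ LinearIndependent ℂ (fun r : Fin (n - k + 1) => A ^ (r : ℕ)) →
      MvPolynomial.eval (fun p => A p.1 p.2) f = 0 := by
  intro A hA hdeg
  obtain ⟨p, hp, hd, h⟩ := Deg.aeval_of_not_linInd A (n - k) hdeg
  have hcl := Deg.main (n - k) (Fin n) A hA p hp hd h
  have hcont : Continuous fun M : Matrix (Fin n) (Fin n) ℂ =>
      MvPolynomial.eval (fun p => M p.1 p.2) f :=
    (MvPolynomial.continuous_eval f).comp (by fun_prop)
  have hclosed : IsClosed {M : Matrix (Fin n) (Fin n) ℂ |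
      MvPolynomial.eval (fun p => M p.1 p.2) f = 0} := isClosed_eq hcont continuous_const
  exact closure_minimal (fun M hM => Deg.density f hvan M hM) hclosed hcl
end

section
/- Let V = {A ∈ Matrix (Fin 3) (Fin 3) ℂ : (I₃, A, A²) is linearly dependent over ℂ} (the 3×3 complex matrices with minimal polynomial of degree at most 2), let I(V) ⊂ R = MvPolynomial (Fin 3 × Fin 3) ℂ be its vanishing ideal, and let S ⊂ R be the set of 3×3 minors of the 3×9 matrix over R whose three rows list the 9 entries of I₃, of the generic matrix X, and of X². Then: (i) I(V) equals the ideal of R generated by S (in particular I(V) is generated by its degree-3 homogeneous component); (ii) the ℂ-linear span of S equals the degree-3 homogeneous component of I(V), i.e. the space of homogeneous polynomials of degree 3 in R vanishing on V; and (iii) this space has dimension 20 over ℂ. -/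
namespace MinPolyAux
open MvPolynomial

/-- On polynomials, multiplication by `Y b / X b` for `b ∈ T` is well defined modulo an ideal
containing the relations `X a * Y b - X b * Y a`. -/
theorem exists_D {τ : Type*} (T : Set τ) (Y : τ → MvPolynomial τ ℂ)
    (J : Ideal (MvPolynomial τ ℂ))
    (hJ : ∀ a ∈ T, ∀ b ∈ T, X a * Y b - X b * Y a ∈ J) :
    ∃ D : MvPolynomial τ ℂ →ₗ[ℂ] (MvPolynomial τ ℂ ⧸ J),
      ∀ b ∈ T, ∀ g, D (X b * g) = Ideal.Quotient.mk J (Y b * g) := by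
  classical
  let d : (τ →₀ ℕ) → (MvPolynomial τ ℂ ⧸ J) := fun α =>
    if h : ∃ b ∈ T, α b ≠ 0 then
      Ideal.Quotient.mk J (Y h.choose * monomial (α - Finsupp.single h.choose 1) 1)
    else 0
  refine ⟨(basisMonomials τ ℂ).constr ℂ d, fun b hb g => ?_⟩
  have key : ((basisMonomials τ ℂ).constr ℂ d) ∘ₗ (LinearMap.mulLeft ℂ (X b)) =
      (Ideal.Quotient.mkₐ ℂ J).toLinearMap ∘ₗ (LinearMap.mulLeft ℂ (Y b)) := by
    refine (basisMonomials τ ℂ).ext fun α => ?_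
    have e1 : (X b * monomial α 1 : MvPolynomial τ ℂ) =
        basisMonomials τ ℂ (α + Finsupp.single b 1) := by
      rw [coe_basisMonomials, X, monomial_mul, add_comm, one_mul]
    have e2 : basisMonomials τ ℂ α = monomial α 1 := by rw [coe_basisMonomials]
    simp only [LinearMap.comp_apply, LinearMap.mulLeft_apply, e2]
    rw [e1, Module.Basis.constr_basis]
    have h : ∃ c ∈ T, (α + Finsupp.single b 1 : τ →₀ ℕ) c ≠ 0 := ⟨b, hb, by simp⟩
    simp only [d, dif_pos h]
    obtain ⟨hc, hc0⟩ := h.choose_spec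
    generalize h.choose = c at hc hc0
    by_cases hcb : c = b
    · subst hcb
      simp
    · have hα : Finsupp.single c 1 ≤ α := by
        rw [Finsupp.single_le_iff]
        have : α c ≠ 0 := by simpa [Finsupp.single_apply, Ne.symm hcb] using hc0
        omega
      obtain ⟨γ, rfl⟩ := exists_add_of_le hα
      have e3 : (Finsupp.single c 1 + γ + Finsupp.single b 1 : τ →₀ ℕ) - Finsupp.single c 1
          = Finsupp.single b 1 + γ := by
        rw [add_assoc, add_tsub_cancel_left, add_comm]
      rw [e3]
      have e4 : ∀ x : τ, (monomial (Finsupp.single x 1 + γ) 1 : MvPolynomial τ ℂ)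
          = X x * monomial γ 1 := fun x => by rw [X, monomial_mul, one_mul]
      rw [e4, e4]
      change Ideal.Quotient.mk J _ = Ideal.Quotient.mk J _
      rw [Ideal.Quotient.eq]
      have := J.mul_mem_right (monomial γ 1) (hJ b hb c hc)
      convert this using 1
      ring
  exact LinearMap.congr_fun key g

/-- The exponent map of the monomial parametrization `x_{ij} ↦ u_i v_j`, `μ ↦ μ`. -/
noncomputable def par : MvPolynomial (Option (Fin 3 × Fin 3)) ℂ →ₐ[ℂ]
    MvPolynomial (Option (Fin 3 ⊕ Fin 3)) ℂ :=
  aeval fun o => o.elim (X none) fun p => X (some (Sum.inl p.1)) * X (some (Sum.inr p.2))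

noncomputable def wv (o : Option (Fin 3 × Fin 3)) : Option (Fin 3 ⊕ Fin 3) →₀ ℕ :=
  o.elim (Finsupp.single none 1) fun p =>
    Finsupp.single (some (Sum.inl p.1)) 1 + Finsupp.single (some (Sum.inr p.2)) 1

noncomputable def wt : (Option (Fin 3 × Fin 3) →₀ ℕ) →+ (Option (Fin 3 ⊕ Fin 3) →₀ ℕ) :=
  Finsupp.liftAddHom fun o => multiplesHom _ (wv o)

theorem wt_single (o : Option (Fin 3 × Fin 3)) : wt (Finsupp.single o 1) = wv o := by
  simp [wt]

theorem exists_of_wt {α : Option (Fin 3 × Fin 3) →₀ ℕ} {x : Option (Fin 3 ⊕ Fin 3)}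
    (h : wt α x ≠ 0) : ∃ o, α o ≠ 0 ∧ wv o x ≠ 0 := by
  by_contra! hc
  apply h
  simp only [wt, Finsupp.liftAddHom_apply, Finsupp.sum, Finsupp.finsetSum_apply]
  refine Finset.sum_eq_zero fun o ho => ?_
  simp [hc o (by simpa using ho)]

theorem split {τ : Type*} {α : τ →₀ ℕ} {o : τ} (h : α o ≠ 0) :
    ∃ β, α = Finsupp.single o 1 + β := by
  apply exists_add_of_le
  rw [Finsupp.single_le_iff]
  omega

theorem mon_add {τ : Type*} (o : τ) (β : τ →₀ ℕ) :
    (monomial (Finsupp.single o 1 + β) 1 : MvPolynomial τ ℂ) = X o * monomial β 1 := by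
  rw [X, monomial_mul, one_mul]

theorem wv_self (o : Option (Fin 3 × Fin 3)) : ∃ x, wv o x ≠ 0 := by
  rcases o with _ | p
  · exact ⟨none, by simp [wv]⟩
  · exact ⟨some (Sum.inl p.1), by simp [wv]⟩

theorem mon_congr (M : Ideal (MvPolynomial (Option (Fin 3 × Fin 3)) ℂ))
    (hM : ∀ i j k l : Fin 3, X (some (i, l)) * X (some (k, j))
      - X (some (i, j)) * X (some (k, l)) ∈ M) :
    ∀ (n : ℕ) (α α' : Option (Fin 3 × Fin 3) →₀ ℕ), α.degree = n → wt α = wt α' →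
      Ideal.Quotient.mk M (monomial α 1) = Ideal.Quotient.mk M (monomial α' 1) := by
  intro n
  induction n with
  | zero =>
    intro α α' h0 h
    have hα : α = 0 := (Finsupp.degree_eq_zero_iff α).mp h0
    subst hα
    have : α' = 0 := by
      by_contra hne
      obtain ⟨o, ho⟩ := Finsupp.ne_iff.mp hne
      obtain ⟨β, rfl⟩ := split (o := o) (by simpa using ho)
      obtain ⟨x, hx⟩ := wv_self o
      rw [map_add, wt_single, map_zero] at h
      have := DFunLike.congr_fun h x
      simp at this
      omega
    rw [this]
  | succ n ih =>
    intro α α' hn h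
    have hne : α ≠ 0 := by
      rintro rfl
      simp at hn
    obtain ⟨o, ho⟩ := Finsupp.ne_iff.mp hne
    obtain ⟨β, rfl⟩ := split (o := o) (by simpa using ho)
    have hβ : β.degree = n := by
      rw [map_add, Finsupp.degree_single] at hn
      omega
    rw [map_add, wt_single] at h
    suffices hs : ∃ β', wt β' = wt β ∧
        Ideal.Quotient.mk M (monomial α' 1) = Ideal.Quotient.mk M (X o * monomial β' 1) by
      obtain ⟨β', h1, h2⟩ := hs
      rw [h2, mon_add, map_mul, map_mul, ih β β' hβ h1.symm]
    have direct : α' o ≠ 0 → ∃ β', wt β' = wt β ∧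
        Ideal.Quotient.mk M (monomial α' 1) = Ideal.Quotient.mk M (X o * monomial β' 1) := by
      intro h'
      obtain ⟨β', rfl⟩ := split h'
      refine ⟨β', ?_, by rw [mon_add]⟩
      rw [map_add, wt_single] at h
      exact (add_left_cancel h).symm
    have pos : ∀ x, wv o x ≠ 0 → wt α' x ≠ 0 := by
      intro x hx
      rw [← h]
      simp
      omega
    rcases o with _ | ⟨i, j⟩
    · obtain ⟨o', h1, h2⟩ := exists_of_wt (pos none (by simp [wv]))
      have : o' = none := by
        rcases o' with _ | p
        · rfl
        · simp [wv] at h2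
      subst this
      exact direct h1
    · obtain ⟨o1, h1, h2⟩ := exists_of_wt (pos (some (Sum.inl i)) (by simp [wv]))
      obtain ⟨o2, h3, h4⟩ := exists_of_wt (pos (some (Sum.inr j)) (by simp [wv]))
      rcases o1 with _ | ⟨i', l⟩
      · simp [wv] at h2
      rcases o2 with _ | ⟨k, j'⟩
      · simp [wv] at h4
      have hi : i' = i := by
        by_contra hc
        simp [wv, hc] at h2
      have hj : j' = j := by
        by_contra hc
        simp [wv, hc] at h4
      subst hi hj
      by_cases hlj : l = j'
      · subst hlj
        exact direct h1
      obtain ⟨γ, rfl⟩ := split h1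
      have h3' : γ (some (k, j')) ≠ 0 := by
        simpa [Finsupp.single_apply, hlj] using h3
      obtain ⟨δ, rfl⟩ := split h3'
      refine ⟨Finsupp.single (some (k, l)) 1 + δ, ?_, ?_⟩
      · rw [map_add, map_add, wt_single, wt_single] at h
        rw [map_add, wt_single]
        apply add_left_cancel (a := wv (some (i', j')))
        rw [h]
        simp only [wv, Option.elim]
        abel
      · rw [mon_add, mon_add, mon_add, Ideal.Quotient.eq]
        have := M.mul_mem_right (monomial δ 1) (hM i' j' k l)
        convert this using 1
        ring

theorem par_monomial (α : Option (Fin 3 × Fin 3) →₀ ℕ) :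
    par (monomial α 1) = monomial (wt α) 1 := by
  induction α using Finsupp.induction_linear with
  | zero => simp
  | add f g hf hg =>
    rw [map_add, ← one_mul (1 : ℂ), ← monomial_mul, ← monomial_mul, map_mul, hf, hg]
  | single o n =>
    have h1 : (Finsupp.single o n : Option (Fin 3 × Fin 3) →₀ ℕ)
        = n • Finsupp.single o 1 := by simp
    have h2 : (monomial (Finsupp.single o n) 1 : MvPolynomial (Option (Fin 3 × Fin 3)) ℂ)
        = X o ^ n := by rw [X_pow_eq_monomial]
    rw [h2, map_pow, h1, map_nsmul, wt_single]
    have h3 : (monomial (n • wv o) 1 : MvPolynomial (Option (Fin 3 ⊕ Fin 3)) ℂ)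
        = monomial (wv o) 1 ^ n := by rw [monomial_pow, one_pow]
    rw [h3]
    congr 1
    rcases o with _ | p
    · rw [par, aeval_X]
      simp [wv, X]
    · rw [par, aeval_X]
      simp [wv, X, monomial_mul]

/-- The ideal of the (cylinder over the) Segre cone is generated by `2 × 2` minors. -/
theorem segre (M : Ideal (MvPolynomial (Option (Fin 3 × Fin 3)) ℂ))
    (hM : ∀ i j k l : Fin 3, X (some (i, l)) * X (some (k, j))
      - X (some (i, j)) * X (some (k, l)) ∈ M)
    (F : MvPolynomial (Option (Fin 3 × Fin 3)) ℂ)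
    (hF : ∀ (m : ℂ) (u v : Fin 3 → ℂ), eval (fun o => o.elim m fun p => u p.1 * v p.2) F = 0) :
    F ∈ M := by
  have hpar : par F = 0 := by
    apply MvPolynomial.funext
    intro x
    rw [map_zero, ← hF (x none) (fun i => x (some (Sum.inl i))) (fun i => x (some (Sum.inr i)))]
    rw [par, aeval_def, eval_eval₂]
    simp only [eval, coe_eval₂Hom]
    congr 1
    · ext; simp
    · funext o
      rcases o with _ | p <;> simp
  classical
  let t : (Option (Fin 3 ⊕ Fin 3) →₀ ℕ) → (MvPolynomial (Option (Fin 3 × Fin 3)) ℂ ⧸ M) := fun β =>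
    if h : ∃ α, wt α = β then Ideal.Quotient.mk M (monomial h.choose 1) else 0
  have key : ((basisMonomials _ ℂ).constr ℂ t) ∘ₗ par.toLinearMap =
      (Ideal.Quotient.mkₐ ℂ M).toLinearMap := by
    refine (basisMonomials _ ℂ).ext fun α => ?_
    have e2 : basisMonomials _ ℂ α = monomial α 1 := by rw [coe_basisMonomials]
    simp only [LinearMap.comp_apply, e2, AlgHom.toLinearMap_apply, par_monomial]
    have e3 : (monomial (wt α) 1 : MvPolynomial (Option (Fin 3 ⊕ Fin 3)) ℂ)
      = basisMonomials _ ℂ (wt α) := by rw [coe_basisMonomials]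
    rw [e3, Module.Basis.constr_basis]
    have h : ∃ α', wt α' = wt α := ⟨α, rfl⟩
    simp only [t, dif_pos h]
    exact mon_congr M hM _ _ _ rfl h.choose_spec
  have := LinearMap.congr_fun key F
  simp only [LinearMap.comp_apply, AlgHom.toLinearMap_apply, hpar, map_zero] at this
  exact Ideal.Quotient.eq_zero_iff_mem.mp this.symm

/-- The traceless-type coordinates: entry minus `δ` times the `(2,2)` entry. -/
def ee {A : Type*} [CommRing A] (M : Matrix (Fin 3) (Fin 3) A) (p : Fin 3 × Fin 3) : A :=
  M p.1 p.2 - (1 : Matrix (Fin 3) (Fin 3) A) p.1 p.2 * M 2 2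

/-- The basic minors. -/
def mm {A : Type*} [CommRing A] (M : Matrix (Fin 3) (Fin 3) A) (p q : Fin 3 × Fin 3) : A :=
  ee M p * ee (M ^ 2) q - ee M q * ee (M ^ 2) p

theorem det_eq {A : Type*} [CommRing A] (M : Matrix (Fin 3) (Fin 3) A)
    (c : Fin 3 → Fin 3 × Fin 3) :
    Matrix.det (Matrix.of fun r s : Fin 3 => (M ^ (r : ℕ)) (c s).1 (c s).2) =
      (1 : Matrix (Fin 3) (Fin 3) A) (c 0).1 (c 0).2 * mm M (c 1) (c 2)
      - (1 : Matrix (Fin 3) (Fin 3) A) (c 1).1 (c 1).2 * mm M (c 0) (c 2)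
      + (1 : Matrix (Fin 3) (Fin 3) A) (c 2).1 (c 2).2 * mm M (c 0) (c 1) := by
  rw [Matrix.det_fin_three]
  simp only [Matrix.of_apply, Fin.val_zero, Fin.val_one, Fin.val_two, pow_zero, pow_one, mm, ee]
  ring

theorem mm_shift {A : Type*} [CommRing A] (M : Matrix (Fin 3) (Fin 3) A) (s : A)
    (p q : Fin 3 × Fin 3) : mm (M + s • 1) p q = mm M p q := by
  have h : (M + s • (1 : Matrix (Fin 3) (Fin 3) A)) ^ 2 = M ^ 2 + (2 * s) • M + (s ^ 2) • 1 := by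
    simp only [pow_two, add_mul, mul_add, smul_mul_assoc, mul_smul_comm, one_mul, mul_one,
      smul_smul, two_mul, add_smul, smul_add]
    abel
  have h1 : (1 : Matrix (Fin 3) (Fin 3) A) 2 2 = 1 := by simp
  simp only [mm, ee, h, Matrix.add_apply, Matrix.smul_apply, smul_eq_mul, h1]
  ring

theorem mm_map {A B : Type*} [CommRing A] [CommRing B] (f : A →+* B)
    (M : Matrix (Fin 3) (Fin 3) A) (p q : Fin 3 × Fin 3) :
    f (mm M p q) = mm (M.map f) p q := by
  have h : (M.map f) ^ 2 = (M ^ 2).map f := (map_pow f.mapMatrix M 2).symm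
  have h1 : ∀ i j, f ((1 : Matrix (Fin 3) (Fin 3) A) i j) = (1 : Matrix (Fin 3) (Fin 3) B) i j := by
    intro i j
    by_cases hij : i = j <;> simp [Matrix.one_apply, hij]
  simp only [mm, ee, h, Matrix.map_apply, map_sub, map_mul, h1]

theorem mm_self {A : Type*} [CommRing A] (M : Matrix (Fin 3) (Fin 3) A)
    (p : Fin 3 × Fin 3) : mm M p p = 0 := by
  simp [mm]

theorem mm_swap {A : Type*} [CommRing A] (M : Matrix (Fin 3) (Fin 3) A)
    (p q : Fin 3 × Fin 3) : mm M q p = - mm M p q := by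
  simp [mm]

theorem mm_last {A : Type*} [CommRing A] (M : Matrix (Fin 3) (Fin 3) A)
    (p : Fin 3 × Fin 3) : mm M p (2, 2) = 0 := by
  simp [mm, ee]

/-- The generic matrix with vanishing `(2,2)` entry. -/
noncomputable def NN : Matrix (Fin 3) (Fin 3) (MvPolynomial (Fin 3 × Fin 3) ℂ) :=
  fun i j => if (i, j) = (2, 2) then 0 else X (i, j)

/-- Cayley-Hamilton type identity. -/
theorem ch_identity {A : Type*} [CommRing A] (N : Matrix (Fin 3) (Fin 3) A)
    (h0 : N 2 2 = 0) (i j : Fin 3) :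
    2 * ((∑ k, ee (N ^ 2) (i, k) * N k j) - (1 : Matrix (Fin 3) (Fin 3) A) i j *
      ∑ k, ee (N ^ 2) (2, k) * N k 2)
      - 3 * (N 0 0 + N 1 1) * ee (N ^ 2) (i, j)
      - ((N ^ 2) 2 2 - (N 0 0 + N 1 1) ^ 2) * N i j
      + (1 : Matrix (Fin 3) (Fin 3) A) i j * 0
      = - ∑ k, (N k k * ee (N ^ 2) (i, j) - ee (N ^ 2) (k, k) * ee N (i, j)) := by
  fin_cases i <;> fin_cases j <;>
  · simp [ee, pow_two, Matrix.mul_apply, Fin.sum_univ_three, h0, Matrix.one_apply]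
    try ring

/-- In a ring where `κ` satisfies the quadratic equation, the `2 × 2` minors of
`N + (κ - tr N)` lie in any ideal containing all `κ N_a - Y_a`. -/
theorem minors_mem {A : Type*} [CommRing A] (N : Matrix (Fin 3) (Fin 3) A)
    (h0 : N 2 2 = 0) (c k : A) (hc : 2 * c = 1)
    (hk : 2 * (k * k) = 3 * (N 0 0 + N 1 1) * k + ((N ^ 2) 2 2 - (N 0 0 + N 1 1) ^ 2))
    (K : Ideal A) (hK : ∀ p, k * ee N p - ee (N ^ 2) p ∈ K) (i j a b : Fin 3) :
    (N + (k - (N 0 0 + N 1 1)) • (1 : Matrix (Fin 3) (Fin 3) A)) i b *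
    (N + (k - (N 0 0 + N 1 1)) • (1 : Matrix (Fin 3) (Fin 3) A)) a j -
    (N + (k - (N 0 0 + N 1 1)) • (1 : Matrix (Fin 3) (Fin 3) A)) i j *
    (N + (k - (N 0 0 + N 1 1)) • (1 : Matrix (Fin 3) (Fin 3) A)) a b ∈ K := by
  set W : Matrix (Fin 3) (Fin 3) A := N + (k - (N 0 0 + N 1 1)) • (1 : Matrix (Fin 3) (Fin 3) A)
    with hW
  have d2 : (1 : Matrix (Fin 3) (Fin 3) A) 2 2 = 1 := by simp
  have hW2 : W ^ 2 = N ^ 2 + (2 * (k - (N 0 0 + N 1 1))) • N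
      + ((k - (N 0 0 + N 1 1)) ^ 2) • (1 : Matrix (Fin 3) (Fin 3) A) := by
    simp only [hW, pow_two, add_mul, mul_add, smul_mul_assoc, mul_smul_comm, one_mul, mul_one,
      smul_smul, two_mul, add_smul, smul_add]
    abel
  have htr : W 0 0 + W 1 1 + W 2 2 = 3 * k - 2 * (N 0 0 + N 1 1) := by
    simp [hW, h0]
    ring
  -- entries of `W² - tr(W) W`
  have g1 : ∀ p q, (W ^ 2) p q - (W 0 0 + W 1 1 + W 2 2) * W p q ∈ K := by
    intro p q
    have := K.neg_mem (hK (p, q))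
    convert this using 1
    rw [htr, hW2]
    simp only [hW, ee, Matrix.add_apply, Matrix.smul_apply, smul_eq_mul, h0]
    linear_combination (-(1 : Matrix (Fin 3) (Fin 3) A) p q) * hk
  have g2 : W 0 0 * W 1 1 + W 0 0 * W 2 2 + W 1 1 * W 2 2 - W 0 1 * W 1 0 - W 0 2 * W 2 0
      - W 1 2 * W 2 1 ∈ K := by
    have := K.mul_mem_left (-c) (K.add_mem (K.add_mem (g1 0 0) (g1 1 1)) (g1 2 2))
    convert this using 1
    simp only [pow_two, Matrix.mul_apply, Fin.sum_univ_three]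
    linear_combination (-(W 0 0 * W 1 1 + W 0 0 * W 2 2 + W 1 1 * W 2 2 - W 0 1 * W 1 0
      - W 0 2 * W 2 0 - W 1 2 * W 2 1)) * hc
  have g3 : ∀ p q, (W ^ 2) p q - (W 0 0 + W 1 1 + W 2 2) * W p q +
      (1 : Matrix (Fin 3) (Fin 3) A) p q * (W 0 0 * W 1 1 + W 0 0 * W 2 2 + W 1 1 * W 2 2
      - W 0 1 * W 1 0 - W 0 2 * W 2 0 - W 1 2 * W 2 1) ∈ K := fun p q =>
    K.add_mem (g1 p q) (K.mul_mem_left _ g2)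
  clear_value W
  have hlt : ∀ i a j b : Fin 3, i < a → j < b → W i b * W a j - W i j * W a b ∈ K := by
    have q00 := K.neg_mem (g3 2 2)
    have q01 := g3 1 2
    have q02 := K.neg_mem (g3 0 2)
    have q10 := g3 2 1
    have q11 := K.neg_mem (g3 1 1)
    have q12 := g3 0 1
    have q20 := K.neg_mem (g3 2 0)
    have q21 := g3 1 0
    have q22 := K.neg_mem (g3 0 0)
    simp only [pow_two, Matrix.mul_apply, Fin.sum_univ_three, Matrix.one_apply] at *
    intro i a j b hia hjb
    fin_cases i <;> fin_cases a <;> first | (exact absurd hia (by decide)) | skip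
    all_goals fin_cases j <;> fin_cases b <;> first | (exact absurd hjb (by decide)) | skip
    · convert q00 using 1; simp; ring
    · convert q01 using 1; simp; ring
    · convert q02 using 1; simp; ring
    · convert q10 using 1; simp; ring
    · convert q11 using 1; simp; ring
    · convert q12 using 1; simp; ring
    · convert q20 using 1; simp; ring
    · convert q21 using 1; simp; ring
    · convert q22 using 1; simp; ring
  rcases lt_trichotomy i a with h1 | h1 | h1
  · rcases lt_trichotomy j b with h2 | h2 | h2
    · exact hlt i a j b h1 h2
    · subst h2
      convert K.zero_mem using 1
      ring
    · convert K.neg_mem (hlt i a b j h1 h2) using 1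
      ring
  · subst h1
    convert K.zero_mem using 1
    ring
  · rcases lt_trichotomy j b with h2 | h2 | h2
    · convert K.neg_mem (hlt a i j b h1 h2) using 1
      ring
    · subst h2
      convert K.zero_mem using 1
      ring
    · convert hlt a i b j h1 h2 using 1
      ring

theorem ee_NN (p : Fin 3 × Fin 3) : ee NN p = NN p.1 p.2 := by
  simp [ee, NN]

theorem NN_ne {p : Fin 3 × Fin 3} (h : p ≠ (2, 2)) : NN p.1 p.2 = X p := by
  simp [NN, h]

theorem NN_last : NN 2 2 = 0 := by simp [NN]

/-- The core of the argument, in normalized coordinates. -/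
theorem core_normalized (f : MvPolynomial (Fin 3 × Fin 3) ℂ)
    (hf : ∀ (m : ℂ) (u v : Fin 3 → ℂ), eval (fun p : Fin 3 × Fin 3 =>
      u p.1 * v p.2 + (1 : Matrix (Fin 3) (Fin 3) ℂ) p.1 p.2 * m) f = 0) :
    aeval (fun p : Fin 3 × Fin 3 => NN p.1 p.2 +
      (1 : Matrix (Fin 3) (Fin 3) (MvPolynomial (Fin 3 × Fin 3) ℂ)) p.1 p.2 * X (2, 2)) f ∈
      Ideal.span (Set.range fun pq : (Fin 3 × Fin 3) × (Fin 3 × Fin 3) => mm NN pq.1 pq.2) := by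
  set J := Ideal.span (Set.range fun pq : (Fin 3 × Fin 3) × (Fin 3 × Fin 3) => mm NN pq.1 pq.2)
    with hJdef
  have hJ : ∀ p q, mm NN p q ∈ J := fun p q => Ideal.subset_span ⟨(p, q), rfl⟩
  obtain ⟨D, hD0⟩ := exists_D {p : Fin 3 × Fin 3 | p ≠ (2, 2)} (fun p => ee (NN ^ 2) p) J (by
    intro a ha b hb
    have := hJ a b
    rw [mm, ee_NN, ee_NN, NN_ne ha, NN_ne hb] at this
    exact this)
  have hD : ∀ i j g, D (NN i j * g) = Ideal.Quotient.mk J (ee (NN ^ 2) (i, j) * g) := by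
    intro i j g
    by_cases h : (i, j) = (2, 2)
    · obtain ⟨rfl, rfl⟩ := Prod.mk.inj h
      simp [NN_last, ee]
    · rw [show NN i j = X (i, j) from NN_ne h]
      exact hD0 (i, j) h g
  set t := NN 0 0 + NN 1 1 with ht
  set hh : MvPolynomial (Fin 3 × Fin 3) ℂ := C (1 / 2) with hhdef
  have h2 : 2 * hh = 1 := by
    rw [hhdef, show (2 : MvPolynomial (Fin 3 × Fin 3) ℂ) = C 2 from (map_ofNat C 2).symm,
      ← C_mul]
    norm_num
  obtain ⟨qa, hqa⟩ : ∃ qa, qa = hh * ((NN ^ 2) 2 2 - t ^ 2) := ⟨_, rfl⟩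
  obtain ⟨qb, hqb⟩ : ∃ qb, qb = hh * (3 * t) := ⟨_, rfl⟩
  -- applying `D` to the quadrics
  have hDY : ∀ i j h, D (h * ee (NN ^ 2) (i, j)) =
      Ideal.Quotient.mk J (h * (qb * ee (NN ^ 2) (i, j) + qa * NN i j)) := by
    intro i j h
    have e1 : h * ee (NN ^ 2) (i, j) = (∑ k, NN i k * (NN k j * h)) -
        ∑ k, NN 2 k * ((1 : Matrix (Fin 3) (Fin 3) (MvPolynomial (Fin 3 × Fin 3) ℂ)) i j *
          (NN k 2 * h)) := by
      simp only [ee, pow_two, Matrix.mul_apply, Fin.sum_univ_three]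
      ring
    rw [e1, map_sub, map_sum, map_sum]
    simp only [hD]
    rw [← map_sum, ← map_sum, ← map_sub, Ideal.Quotient.eq]
    have e2 : -∑ k, mm NN (k, k) (i, j) ∈ J := J.neg_mem (J.sum_mem fun k _ => hJ _ _)
    have e3 := J.mul_mem_left (hh * h) e2
    have e4 := ch_identity NN NN_last i j
    convert e3 using 1
    simp only [mm, ee_NN] at *
    simp only [Fin.sum_univ_three] at *
    rw [hqa, hqb]
    linear_combination hh * h * e4 - h * (ee (NN ^ 2) (i, 0) * NN 0 j + ee (NN ^ 2) (i, 1) * NN 1 j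
      + ee (NN ^ 2) (i, 2) * NN 2 j
      - (1 : Matrix (Fin 3) (Fin 3) (MvPolynomial (Fin 3 × Fin 3) ℂ)) i j *
      (ee (NN ^ 2) (2, 0) * NN 0 2 + ee (NN ^ 2) (2, 1) * NN 1 2 + ee (NN ^ 2) (2, 2) * NN 2 2))
      * h2
  let κ : (QuadraticAlgebra (MvPolynomial (Fin 3 × Fin 3) ℂ) qa qb) := ⟨0, 1⟩
  let ι : MvPolynomial (Fin 3 × Fin 3) ℂ →ₐ[ℂ] (QuadraticAlgebra (MvPolynomial (Fin 3 × Fin 3) ℂ) qa qb) := Algebra.algHom ℂ _ _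
  have ιre : ∀ g, (ι g).re = g := fun g => rfl
  have ιim : ∀ g, (ι g).im = 0 := fun g => rfl
  let NQ : Matrix (Fin 3) (Fin 3) (QuadraticAlgebra (MvPolynomial (Fin 3 × Fin 3) ℂ) qa qb) := NN.map ι
  have hNQ2 : NQ ^ 2 = (NN ^ 2).map ι := (map_pow ι.toRingHom.mapMatrix NN 2).symm
  have hι1 : ∀ i j, (1 : Matrix (Fin 3) (Fin 3) (QuadraticAlgebra (MvPolynomial (Fin 3 × Fin 3) ℂ) qa qb)) i j =
      ι ((1 : Matrix (Fin 3) (Fin 3) (MvPolynomial (Fin 3 × Fin 3) ℂ)) i j) := by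
    intro i j
    by_cases hij : i = j <;> simp [Matrix.one_apply, hij]
  have heeQ : ∀ p, ee NQ p = ι (NN p.1 p.2) := by
    intro p
    rw [← ee_NN]
    simp only [ee, map_sub, map_mul, hι1, NQ, Matrix.map_apply]
  have heeQ2 : ∀ p, ee (NQ ^ 2) p = ι (ee (NN ^ 2) p) := by
    intro p
    simp only [ee, map_sub, map_mul, hι1, hNQ2, Matrix.map_apply]
  let K : Ideal (QuadraticAlgebra (MvPolynomial (Fin 3 × Fin 3) ℂ) qa qb) := Ideal.span (Set.range fun p => κ * ee NQ p - ee (NQ ^ 2) p)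
  have hΦ : ∀ x ∈ K, Ideal.Quotient.mk J x.re + D x.im = 0 := by
    intro x hx
    refine Submodule.span_induction (p := fun x _ => ∀ c : (QuadraticAlgebra (MvPolynomial (Fin 3 × Fin 3) ℂ) qa qb), Ideal.Quotient.mk J (c * x).re
      + D (c * x).im = 0) ?_ ?_ ?_ ?_ hx 1 |> fun h => by simpa using h
    · rintro _ ⟨⟨i, j⟩, rfl⟩ ⟨g, h⟩
      simp only [heeQ, heeQ2]
      have r1 : ((⟨g, h⟩ : (QuadraticAlgebra (MvPolynomial (Fin 3 × Fin 3) ℂ) qa qb)) * (κ * ι (NN i j) - ι (ee (NN ^ 2) (i, j)))).re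
          = -(g * ee (NN ^ 2) (i, j)) + h * (qa * NN i j) := by
        simp [κ, ιre, ιim]
        ring
      have r2 : ((⟨g, h⟩ : (QuadraticAlgebra (MvPolynomial (Fin 3 × Fin 3) ℂ) qa qb)) * (κ * ι (NN i j) - ι (ee (NN ^ 2) (i, j)))).im
          = NN i j * g - h * ee (NN ^ 2) (i, j) + NN i j * (h * qb) := by
        simp [κ, ιre, ιim]
        ring
      rw [r1, r2, map_add D, map_sub D, hD, hD, hDY, ← map_sub, ← map_add, ← map_add,
        ← map_zero (Ideal.Quotient.mk J)]
      congr 1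
      ring
    · intro c
      simp
    · intro x y _ _ hx hy c
      have h1 := hx c
      have h2 := hy c
      rw [mul_add, QuadraticAlgebra.re_add, QuadraticAlgebra.im_add, map_add, map_add]
      linear_combination h1 + h2
    · intro a x _ hx c
      rw [smul_eq_mul, ← mul_assoc]
      exact hx _
  have hk : 2 * (κ * κ) = 3 * (NQ 0 0 + NQ 1 1) * κ + ((NQ ^ 2) 2 2 - (NQ 0 0 + NQ 1 1) ^ 2) := by
    have e1 : κ * κ = ι qb * κ + ι qa := by
      apply QuadraticAlgebra.ext <;> simp [κ, ιre, ιim]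
    have e2 : (2 : (QuadraticAlgebra (MvPolynomial (Fin 3 × Fin 3) ℂ) qa qb)) * ι hh = 1 := by
      rw [← map_ofNat ι 2, ← map_mul, h2, map_one]
    have e3 := congrArg ι hqa
    have e4 := congrArg ι hqb
    rw [ht] at e3 e4
    rw [e1, hNQ2, e3, e4]
    simp only [NQ, Matrix.map_apply, map_mul, map_add, map_sub, map_pow, map_ofNat]
    linear_combination (3 * (ι (NN 0 0) + ι (NN 1 1)) * κ + (ι ((NN ^ 2) 2 2)
      - (ι (NN 0 0) + ι (NN 1 1)) ^ 2)) * e2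
  have hmin := minors_mem NQ (by simp [NQ, NN_last]) (ι hh) κ
    (by rw [← map_ofNat ι 2, ← map_mul, h2, map_one]) hk K
    (fun p => Ideal.subset_span ⟨p, rfl⟩)
  set W : Matrix (Fin 3) (Fin 3) (QuadraticAlgebra (MvPolynomial (Fin 3 × Fin 3) ℂ) qa qb) := NQ + (κ - (NQ 0 0 + NQ 1 1)) • (1 : Matrix (Fin 3) (Fin 3) (QuadraticAlgebra (MvPolynomial (Fin 3 × Fin 3) ℂ) qa qb))
    with hW
  let G : MvPolynomial (Option (Fin 3 × Fin 3)) ℂ →ₐ[ℂ] (QuadraticAlgebra (MvPolynomial (Fin 3 × Fin 3) ℂ) qa qb) :=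
    aeval fun o => o.elim (ι (X (2, 2)) - (κ - (NQ 0 0 + NQ 1 1))) fun p => W p.1 p.2
  let sh : MvPolynomial (Fin 3 × Fin 3) ℂ →ₐ[ℂ] MvPolynomial (Option (Fin 3 × Fin 3)) ℂ :=
    aeval fun p => X (some p) + (1 : Matrix (Fin 3) (Fin 3) _) p.1 p.2 * X none
  have hseg : sh f ∈ K.comap G := by
    refine segre _ ?_ _ ?_
    · intro i j k l
      rw [Ideal.mem_comap, map_sub, map_mul, map_mul]
      simp only [G, aeval_X, Option.elim]
      exact hmin i j k l
    · intro m u v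
      rw [← hf m u v]
      rw [show eval (fun o : Option (Fin 3 × Fin 3) => o.elim m fun p => u p.1 * v p.2) (sh f)
        = ((aeval (fun o : Option (Fin 3 × Fin 3) => o.elim m fun p => u p.1 * v p.2)).comp sh) f
          by simp [aeval_eq_eval]]
      rw [← coe_aeval_eq_eval]
      change _ = aeval _ f
      congr 1
      refine algHom_ext fun p => ?_
      by_cases h : p.1 = p.2 <;> simp [sh, Matrix.one_apply, h]
  have hcomp : G (sh f) = ι (aeval (fun p : Fin 3 × Fin 3 => NN p.1 p.2 +
      (1 : Matrix (Fin 3) (Fin 3) (MvPolynomial (Fin 3 × Fin 3) ℂ)) p.1 p.2 * X (2, 2)) f) := by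
    rw [← AlgHom.comp_apply, ← AlgHom.comp_apply]
    congr 1
    refine algHom_ext fun p => ?_
    by_cases h : p.1 = p.2 <;> simp [sh, G, hW, NQ, Matrix.one_apply, h]
  have := hΦ _ (Ideal.mem_comap.mp hseg)
  rw [hcomp, ιre, ιim, map_zero, add_zero] at this
  exact Ideal.Quotient.eq_zero_iff_mem.mp this

/-- The generic matrix. -/
noncomputable def XX : Matrix (Fin 3) (Fin 3) (MvPolynomial (Fin 3 × Fin 3) ℂ) :=
  fun i j => X (i, j)

theorem core (f : MvPolynomial (Fin 3 × Fin 3) ℂ)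
    (hf : ∀ (m : ℂ) (u v : Fin 3 → ℂ), eval (fun p : Fin 3 × Fin 3 =>
      u p.1 * v p.2 + (1 : Matrix (Fin 3) (Fin 3) ℂ) p.1 p.2 * m) f = 0) :
    f ∈ Ideal.span (Set.range fun pq : (Fin 3 × Fin 3) × (Fin 3 × Fin 3) => mm XX pq.1 pq.2) := by
  have h := core_normalized f hf
  let τ : MvPolynomial (Fin 3 × Fin 3) ℂ →ₐ[ℂ] MvPolynomial (Fin 3 × Fin 3) ℂ :=
    aeval fun p => if p = (2, 2) then X (2, 2) else
      X p - (1 : Matrix (Fin 3) (Fin 3) (MvPolynomial (Fin 3 × Fin 3) ℂ)) p.1 p.2 * X (2, 2)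
  have hτN : NN.map τ.toRingHom = XX + (-X (2, 2) : MvPolynomial (Fin 3 × Fin 3) ℂ) •
      (1 : Matrix (Fin 3) (Fin 3) (MvPolynomial (Fin 3 × Fin 3) ℂ)) := by
    ext1 i j
    by_cases h : (i, j) = (2, 2)
    · obtain ⟨rfl, rfl⟩ := Prod.mk.inj h
      simp [NN_last, XX]
    · rw [Matrix.map_apply, show NN i j = X (i, j) from NN_ne h]
      simp [τ, h, XX]
      ring
  have h1 := Ideal.mem_map_of_mem τ.toRingHom h
  rw [Ideal.map_span, ← Set.range_comp] at h1
  have h2 : (τ.toRingHom ∘ fun pq : (Fin 3 × Fin 3) × (Fin 3 × Fin 3) => mm NN pq.1 pq.2) =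
      fun pq => mm XX pq.1 pq.2 := by
    funext pq
    rw [Function.comp_apply, mm_map, hτN, mm_shift]
  rw [h2] at h1
  convert h1 using 1
  change f = τ _
  rw [← AlgHom.comp_apply]
  conv_lhs => rw [← AlgHom.id_apply (R := ℂ) f]
  congr 1
  refine algHom_ext fun p => ?_
  rw [AlgHom.comp_apply, aeval_X, map_add, map_mul]
  by_cases h : p = (2, 2)
  · subst h
    simp [NN_last, τ]
  · rw [NN_ne h]
    by_cases h' : p.1 = p.2 <;> simp [τ, h, Matrix.one_apply, h']

/-- The index pairs of a basis of the space of minors. -/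
def pr : Fin 20 → (Fin 3 × Fin 3) × (Fin 3 × Fin 3) :=
  ![((0, 0), (1, 1)), ((0, 0), (0, 1)), ((0, 0), (0, 2)), ((0, 0), (1, 0)),
    ((0, 0), (1, 2)), ((0, 0), (2, 0)), ((0, 0), (2, 1)), ((1, 1), (0, 1)),
    ((1, 1), (0, 2)), ((1, 1), (1, 0)), ((1, 1), (1, 2)), ((1, 1), (2, 0)),
    ((1, 1), (2, 1)), ((0, 1), (0, 2)), ((0, 1), (1, 0)), ((0, 1), (2, 1)),
    ((0, 2), (1, 2)), ((1, 0), (1, 2)), ((1, 0), (2, 0)), ((2, 0), (2, 1))]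

theorem eval_mm (A : Matrix (Fin 3) (Fin 3) ℂ) (p q : Fin 3 × Fin 3) :
    eval (fun p => A p.1 p.2) (mm XX p q) = mm A p q := by
  rw [mm_map]
  congr 1
  ext i j
  simp [XX]

set_option maxHeartbeats 2000000 in
theorem pr_indep : LinearIndependent ℂ (fun k : Fin 20 => mm XX (pr k).1 (pr k).2) := by
  rw [Fintype.linearIndependent_iff]
  intro g hg
  have key : ∀ A : Matrix (Fin 3) (Fin 3) ℂ, ∑ k, g k * mm A (pr k).1 (pr k).2 = 0 := by
    intro A
    have := congrArg (eval (fun p : Fin 3 × Fin 3 => A p.1 p.2)) hg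
    simpa only [map_sum, smul_eval, eval_mm, map_zero] using this
  have key2 : ∀ A : Matrix (Fin 3) (Fin 3) ℂ, 0 + g 0 * mm A (0, 0) (1, 1) +
      g 1 * mm A (0, 0) (0, 1) +
      g 2 * mm A (0, 0) (0, 2) +
      g 3 * mm A (0, 0) (1, 0) +
      g 4 * mm A (0, 0) (1, 2) +
      g 5 * mm A (0, 0) (2, 0) +
      g 6 * mm A (0, 0) (2, 1) +
      g 7 * mm A (1, 1) (0, 1) +
      g 8 * mm A (1, 1) (0, 2) +
      g 9 * mm A (1, 1) (1, 0) +
      g 10 * mm A (1, 1) (1, 2) +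
      g 11 * mm A (1, 1) (2, 0) +
      g 12 * mm A (1, 1) (2, 1) +
      g 13 * mm A (0, 1) (0, 2) +
      g 14 * mm A (0, 1) (1, 0) +
      g 15 * mm A (0, 1) (2, 1) +
      g 16 * mm A (0, 2) (1, 2) +
      g 17 * mm A (1, 0) (1, 2) +
      g 18 * mm A (1, 0) (2, 0) +
      g 19 * mm A (2, 0) (2, 1) = 0 := by
    intro A
    have h := key A
    simp only [Fin.sum_univ_castSucc, Fin.sum_univ_zero] at h
    exact h
  have e0 := key2 !![1, 0, 0; 0, -1, 0; 0, 0, 0]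
  simp [mm, ee, pow_two, Matrix.mul_apply, Fin.sum_univ_three] at e0
  have e1 := key2 !![1, 0, 0; 0, 0, 1; 0, 0, 0]
  simp [mm, ee, pow_two, Matrix.mul_apply, Fin.sum_univ_three] at e1
  have e2 := key2 !![1, 0, 0; 0, 0, 0; 0, 1, 0]
  simp [mm, ee, pow_two, Matrix.mul_apply, Fin.sum_univ_three] at e2
  have e3 := key2 !![0, 0, 1; 0, 1, 0; 0, 0, 0]
  simp [mm, ee, pow_two, Matrix.mul_apply, Fin.sum_univ_three] at e3
  have e4 := key2 !![0, 0, 0; 0, 1, 0; 1, 0, 0]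
  simp [mm, ee, pow_two, Matrix.mul_apply, Fin.sum_univ_three] at e4
  have e5 := key2 !![0, 1, 0; 0, 0, 1; 0, 0, 0]
  simp [mm, ee, pow_two, Matrix.mul_apply, Fin.sum_univ_three] at e5
  have e6 := key2 !![0, 1, 0; 0, 0, -1; 0, 0, 0]
  simp [mm, ee, pow_two, Matrix.mul_apply, Fin.sum_univ_three] at e6
  have e7 := key2 !![0, 1, 0; 0, 0, 0; 1, 0, 0]
  simp [mm, ee, pow_two, Matrix.mul_apply, Fin.sum_univ_three] at e7
  have e8 := key2 !![0, 1, 0; 0, 0, 0; -1, 0, 0]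
  simp [mm, ee, pow_two, Matrix.mul_apply, Fin.sum_univ_three] at e8
  have e9 := key2 !![0, 0, 1; 1, 0, 0; 0, 0, 0]
  simp [mm, ee, pow_two, Matrix.mul_apply, Fin.sum_univ_three] at e9
  have e10 := key2 !![0, 0, 0; 1, 0, 0; 0, 1, 0]
  simp [mm, ee, pow_two, Matrix.mul_apply, Fin.sum_univ_three] at e10
  have e11 := key2 !![1, 1, 0; 0, 1, 0; 0, 0, 0]
  simp [mm, ee, pow_two, Matrix.mul_apply, Fin.sum_univ_three] at e11
  have e12 := key2 !![1, 0, 0; 1, 1, 0; 0, 0, 0]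
  simp [mm, ee, pow_two, Matrix.mul_apply, Fin.sum_univ_three] at e12
  have e13 := key2 !![1, 1, 1; 0, 0, -1; 0, 0, 0]
  simp [mm, ee, pow_two, Matrix.mul_apply, Fin.sum_univ_three] at e13
  have e14 := key2 !![1, 1, 1; 0, 0, 0; 0, -1, 0]
  simp [mm, ee, pow_two, Matrix.mul_apply, Fin.sum_univ_three] at e14
  have e15 := key2 !![1, 0, 0; 1, 0, 1; -1, 0, 0]
  simp [mm, ee, pow_two, Matrix.mul_apply, Fin.sum_univ_three] at e15
  have e16 := key2 !![1, 0, 0; 1, 0, 0; 1, -1, 0]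
  simp [mm, ee, pow_two, Matrix.mul_apply, Fin.sum_univ_three] at e16
  have e17 := key2 !![0, 1, 0; 0, 1, 0; 1, -1, 0]
  simp [mm, ee, pow_two, Matrix.mul_apply, Fin.sum_univ_three] at e17
  have e18 := key2 !![0, 0, 1; 1, 1, -1; 0, 0, 0]
  simp [mm, ee, pow_two, Matrix.mul_apply, Fin.sum_univ_three] at e18
  have e19 := key2 !![0, 1, 0; 0, 0, 1; 1, 0, 0]
  simp [mm, ee, pow_two, Matrix.mul_apply, Fin.sum_univ_three] at e19
  intro k
  fin_cases k
  · change g 0 = 0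
    linear_combination (1) * e0
  · change g 1 = 0
    linear_combination (1) * e2 + (1/2) * e5 + (-1/2) * e6 + (-1) * e14
  · change g 2 = 0
    linear_combination (1) * e1 + (-1/2) * e5 + (1/2) * e6 + (-1) * e13
  · change g 3 = 0
    linear_combination (-1) * e1 + (-1/2) * e7 + (-1/2) * e8 + (-1) * e10 + (-1) * e15
  · change g 4 = 0
    linear_combination (1) * e1
  · change g 5 = 0
    linear_combination (1) * e2 + (-1/2) * e7 + (-1/2) * e8 + (-1) * e10 + (-1) * e16
  · change g 6 = 0
    linear_combination (1) * e2
  · change g 7 = 0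
    linear_combination (-1) * e2 + (-1/2) * e5 + (1/2) * e6 + (1) * e11 + (1) * e14
  · change g 8 = 0
    linear_combination (1) * e3
  · change g 9 = 0
    linear_combination (1) * e1 + (1/2) * e7 + (1/2) * e8 + (1) * e10 + (1) * e12 + (1) * e15
  · change g 10 = 0
    linear_combination (1) * e3 + (-1/2) * e5 + (-1/2) * e6 + (-1) * e9 + (1) * e18
  · change g 11 = 0
    linear_combination (1) * e4
  · change g 12 = 0
    linear_combination (1) * e4 + (-1/2) * e7 + (1/2) * e8 + (1) * e17
  · change g 13 = 0
    linear_combination (1/2) * e5 + (-1/2) * e6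
  · change g 14 = 0
    linear_combination (-1/2) * e5 + (1/2) * e6 + (-1/2) * e7 + (1/2) * e8 + (1) * e9 + (1) * e10 + (1) * e19
  · change g 15 = 0
    linear_combination (1/2) * e7 + (-1/2) * e8
  · change g 16 = 0
    linear_combination (-1/2) * e5 + (-1/2) * e6
  · change g 17 = 0
    linear_combination (1/2) * e5 + (1/2) * e6 + (1) * e9
  · change g 18 = 0
    linear_combination (1/2) * e7 + (1/2) * e8 + (1) * e10
  · change g 19 = 0
    linear_combination (1/2) * e7 + (1/2) * e8

/-- The relations coming from `X * X² = X² * X`. -/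
theorem mm_rel {A : Type*} [CommRing A] (M : Matrix (Fin 3) (Fin 3) A) (i j : Fin 3) :
    mm M (i, 0) (0, j) + mm M (i, 1) (1, j) + mm M (i, 2) (2, j) = 0 := by
  fin_cases i <;> fin_cases j <;>
  · simp [mm, ee, pow_two, Matrix.mul_apply, Fin.sum_univ_three, Matrix.one_apply]
    try ring

theorem span_aux (Q : Fin 3 × Fin 3 → Fin 3 × Fin 3 → Prop)
    (hb : ∀ k : Fin 20, Q (pr k).1 (pr k).2)
    (sw : ∀ p q, Q p q → Q q p) (z1 : ∀ p, Q p p) (z2 : ∀ p, Q p (2, 2))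
    (rel : ∀ i j k l m : Fin 3, ({k, l, m} : Finset (Fin 3)) = Finset.univ →
      Q (i, l) (l, j) → Q (i, m) (m, j) → Q (i, k) (k, j)) (p q : Fin 3 × Fin 3) : Q p q := by
  have z3 : ∀ p, Q (2, 2) p := fun p => sw _ _ (z2 p)
  have b0 : Q (0, 0) (1, 1) := hb 0
  have b1 : Q (0, 0) (0, 1) := hb 1
  have b2 : Q (0, 0) (0, 2) := hb 2
  have b3 : Q (0, 0) (1, 0) := hb 3
  have b4 : Q (0, 0) (1, 2) := hb 4
  have b5 : Q (0, 0) (2, 0) := hb 5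
  have b6 : Q (0, 0) (2, 1) := hb 6
  have b7 : Q (1, 1) (0, 1) := hb 7
  have b8 : Q (1, 1) (0, 2) := hb 8
  have b9 : Q (1, 1) (1, 0) := hb 9
  have b10 : Q (1, 1) (1, 2) := hb 10
  have b11 : Q (1, 1) (2, 0) := hb 11
  have b12 : Q (1, 1) (2, 1) := hb 12
  have b13 : Q (0, 1) (0, 2) := hb 13
  have b14 : Q (0, 1) (1, 0) := hb 14
  have b15 : Q (0, 1) (2, 1) := hb 15
  have b16 : Q (0, 2) (1, 2) := hb 16
  have b17 : Q (1, 0) (1, 2) := hb 17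
  have b18 : Q (1, 0) (2, 0) := hb 18
  have b19 : Q (2, 0) (2, 1) := hb 19
  have r01 : Q (0, 2) (2, 1) := rel 0 1 2 0 1 (by decide) b1 (sw _ _ b7)
  have r02 : Q (0, 1) (1, 2) := rel 0 2 1 0 2 (by decide) b2 (z2 _)
  have r10 : Q (1, 2) (2, 0) := rel 1 0 2 0 1 (by decide) (sw _ _ b3) b9
  have r12 : Q (1, 0) (0, 2) := rel 1 2 0 1 2 (by decide) b10 (z2 _)
  have r20 : Q (2, 1) (1, 0) := rel 2 0 1 0 2 (by decide) (sw _ _ b5) (z3 _)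
  have r21 : Q (2, 0) (0, 1) := rel 2 1 0 1 2 (by decide) (sw _ _ b12) (z3 _)
  have r00 : Q (0, 2) (2, 0) := rel 0 0 2 0 1 (by decide) (z1 _) b14
  have r11 : Q (1, 2) (2, 1) := rel 1 1 2 0 1 (by decide) (sw _ _ b14) (z1 _)
  obtain ⟨i, j⟩ := p
  obtain ⟨k, l⟩ := q
  fin_cases i <;> fin_cases j <;> fin_cases k <;> fin_cases l <;>
    first
    | exact z1 _
    | exact z2 _
    | exact z3 _
    | assumption
    | (apply sw; assumption)

theorem mm_mem_span (p q : Fin 3 × Fin 3) :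
    mm XX p q ∈ Submodule.span ℂ (Set.range fun k : Fin 20 => mm XX (pr k).1 (pr k).2) := by
  refine span_aux (fun p q => mm XX p q ∈
    Submodule.span ℂ (Set.range fun k : Fin 20 => mm XX (pr k).1 (pr k).2)) ?_ ?_ ?_ ?_ ?_ p q
  · exact fun k => Submodule.subset_span ⟨k, rfl⟩
  · intro p q h
    rw [mm_swap]
    exact Submodule.neg_mem _ h
  · intro p
    rw [mm_self]
    exact Submodule.zero_mem _
  · intro p
    rw [mm_last]
    exact Submodule.zero_mem _
  · intro i j k l m hklm h1 h2
    have gen : ∀ F : Fin 3 → MvPolynomial (Fin 3 × Fin 3) ℂ, F 0 + F 1 + F 2 = 0 →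
        F k = -(F l + F m) := by
      intro F hF
      clear h1 h2
      fin_cases k <;> fin_cases l <;> fin_cases m <;>
        first
        | exact absurd hklm (by decide)
        | (simp only [Fin.zero_eta, Fin.mk_one, Fin.reduceFinMk]; linear_combination hF)
    have hr := gen (fun k => mm XX (i, k) (k, j)) (mm_rel XX i j)
    rw [hr]
    exact Submodule.neg_mem _ (Submodule.add_mem _ h1 h2)

theorem ee_XX_hom (p : Fin 3 × Fin 3) : (ee XX p).IsHomogeneous 1 := by
  unfold ee
  by_cases h : p.1 = p.2
  · rw [h, Matrix.one_apply_eq, one_mul]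
    exact (isHomogeneous_X _ _).sub (isHomogeneous_X _ _)
  · rw [Matrix.one_apply_ne h, zero_mul, sub_zero]
    exact isHomogeneous_X _ _

theorem ee_XX2_hom (p : Fin 3 × Fin 3) : (ee (XX ^ 2) p).IsHomogeneous 2 := by
  have h2 : ∀ i j, ((XX ^ 2) i j).IsHomogeneous 2 := by
    intro i j
    rw [pow_two, Matrix.mul_apply]
    refine IsHomogeneous.sum _ _ _ fun k _ => ?_
    exact (isHomogeneous_X _ _).mul (isHomogeneous_X _ _)
  unfold ee
  by_cases h : p.1 = p.2
  · rw [h, Matrix.one_apply_eq, one_mul]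
    exact (h2 _ _).sub (h2 _ _)
  · rw [Matrix.one_apply_ne h, zero_mul, sub_zero]
    exact h2 _ _

theorem mm_hom (p q : Fin 3 × Fin 3) : (mm XX p q).IsHomogeneous 3 :=
  ((ee_XX_hom p).mul (ee_XX2_hom q)).sub ((ee_XX_hom q).mul (ee_XX2_hom p))

/-- A cubic form in an ideal generated by cubic forms is in their linear span. -/
theorem hom_mem_span {τ : Type*} (S : Set (MvPolynomial τ ℂ)) (hS : ∀ s ∈ S, s.IsHomogeneous 3)
    (f : MvPolynomial τ ℂ) (hf : f ∈ Ideal.span S) (h3 : f.IsHomogeneous 3) :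
    f ∈ Submodule.span ℂ S := by
  have key : ∀ (g s : MvPolynomial τ ℂ), s.IsHomogeneous 3 →
      homogeneousComponent 3 (g * s) = coeff 0 g • s := by
    intro g s hs
    have hg := sum_homogeneousComponent g
    conv_lhs => rw [← hg, Finset.sum_mul, map_sum]
    rw [Finset.sum_eq_single 0]
    · rw [homogeneousComponent_zero, homogeneousComponent_C_mul,
        homogeneousComponent_eq_self hs, smul_eq_C_mul]
    · intro k _ hk
      have h := (homogeneousComponent_isHomogeneous k g).mul hs
      rw [homogeneousComponent_of_mem h, if_neg (by omega)]
    · intro h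
      simp at h
  rw [← homogeneousComponent_eq_self h3]
  obtain ⟨n, c, s, rfl⟩ := Submodule.mem_span_set'.mp hf
  rw [map_sum]
  refine Submodule.sum_mem _ fun i _ => ?_
  rw [smul_eq_mul, key _ _ (hS _ (s i).2)]
  exact Submodule.smul_mem _ _ (Submodule.subset_span (s i).2)

theorem mem_V (m : ℂ) (u v : Fin 3 → ℂ) :
    ¬ LinearIndependent ℂ (fun r : Fin 3 => (Matrix.of fun i j =>
      u i * v j + (1 : Matrix (Fin 3) (Fin 3) ℂ) i j * m : Matrix (Fin 3) (Fin 3) ℂ) ^ (r : ℕ)) := by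
  intro h
  rw [Fintype.linearIndependent_iff] at h
  have := h ![m ^ 2 + m * (u 0 * v 0 + u 1 * v 1 + u 2 * v 2),
    -(2 * m + (u 0 * v 0 + u 1 * v 1 + u 2 * v 2)), 1] (by
      rw [Fin.sum_univ_three]
      ext i j
      fin_cases i <;> fin_cases j <;>
      · simp [pow_two, Matrix.mul_apply, Fin.sum_univ_three, Matrix.one_apply]
        ring) 2
  simp at this

theorem core_V (f : MvPolynomial (Fin 3 × Fin 3) ℂ)
    (hf : ∀ A : Matrix (Fin 3) (Fin 3) ℂ,
      ¬ LinearIndependent ℂ (fun r : Fin 3 => A ^ (r : ℕ)) →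
      eval (fun p : Fin 3 × Fin 3 => A p.1 p.2) f = 0) :
    f ∈ Ideal.span (Set.range fun pq : (Fin 3 × Fin 3) × (Fin 3 × Fin 3) => mm XX pq.1 pq.2) := by
  apply core
  intro m u v
  have h := hf (Matrix.of fun i j => u i * v j + (1 : Matrix (Fin 3) (Fin 3) ℂ) i j * m)
    (mem_V m u v)
  simp only [Matrix.of_apply] at h
  exact h

theorem eval_det_zero (A : Matrix (Fin 3) (Fin 3) ℂ)
    (hA : ¬ LinearIndependent ℂ (fun r : Fin 3 => A ^ (r : ℕ))) (c : Fin 3 → Fin 3 × Fin 3) :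
    eval (fun p => A p.1 p.2)
      (Matrix.det (Matrix.of fun r s : Fin 3 => (XX ^ (r : ℕ)) (c s).1 (c s).2)) = 0 := by
  rw [RingHom.map_det]
  by_contra hne
  apply hA
  have hX : (eval (fun p : Fin 3 × Fin 3 => A p.1 p.2)).mapMatrix XX = A := by
    ext i j
    simp [XX]
  have hrow := Matrix.linearIndependent_rows_of_det_ne_zero hne
  let Lm : Matrix (Fin 3) (Fin 3) ℂ →ₗ[ℂ] (Fin 3 → ℂ) :=
    LinearMap.pi fun s => Matrix.entryLinearMap ℂ ℂ (c s).1 (c s).2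
  refine LinearIndependent.of_comp Lm ?_
  have hfun : (⇑Lm ∘ fun r : Fin 3 => A ^ (r : ℕ)) = fun i => (eval fun p : Fin 3 × Fin 3 =>
      A p.1 p.2).mapMatrix (Matrix.of fun r s : Fin 3 => (XX ^ (r : ℕ)) (c s).1 (c s).2) i := by
    funext r s
    have := congrFun (congrFun (map_pow (eval (fun p : Fin 3 × Fin 3 => A p.1 p.2)).mapMatrix XX
      (r : ℕ)) (c s).1) (c s).2
    rw [hX] at this
    simp only [Lm, Function.comp_apply, LinearMap.pi_apply, Matrix.entryLinearMap_apply]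
    exact this.symm
  rw [hfun]
  exact hrow

end MinPolyAux

/-- For the variety `V` of `3×3` complex matrices with minimal polynomial of degree
at most `2`: the vanishing ideal of `V` is generated by the `3×3` minors of the matrix
with rows `I₃, X, X²`; their ℂ-span is exactly the degree-3 homogeneous component of
the vanishing ideal; and this space has dimension `20`. -/
theorem stmt_8
    (X : Matrix (Fin 3) (Fin 3) (MvPolynomial (Fin 3 × Fin 3) ℂ))
    (hX : ∀ i j, X i j = MvPolynomial.X (i, j))
    (V : Set (Matrix (Fin 3) (Fin 3) ℂ))
    (hV : V = {A | ¬ LinearIndependent ℂ (fun r : Fin 3 => A ^ (r : ℕ))})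
    (S : Set (MvPolynomial (Fin 3 × Fin 3) ℂ))
    (hS : S = { d | ∃ c : Fin 3 → Fin 3 × Fin 3, Function.Injective c ∧
      d = Matrix.det (Matrix.of fun r s : Fin 3 => (X ^ (r : ℕ)) (c s).1 (c s).2) }) :
    (∀ f : MvPolynomial (Fin 3 × Fin 3) ℂ, f ∈ Ideal.span S ↔
      ∀ A ∈ V, MvPolynomial.eval (fun p => A p.1 p.2) f = 0) ∧
    (∀ f : MvPolynomial (Fin 3 × Fin 3) ℂ, f ∈ Submodule.span ℂ S ↔
      (f.IsHomogeneous 3 ∧ ∀ A ∈ V, MvPolynomial.eval (fun p => A p.1 p.2) f = 0)) ∧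
    Module.finrank ℂ (Submodule.span ℂ S) = 20 := by
  obtain rfl : X = MinPolyAux.XX := by
    ext1 i j
    exact hX i j
  subst hV hS
  set S := { d | ∃ c : Fin 3 → Fin 3 × Fin 3, Function.Injective c ∧
      d = Matrix.det (Matrix.of fun r s : Fin 3 =>
        (MinPolyAux.XX ^ (r : ℕ)) (c s).1 (c s).2) } with hS
  have hmem : ∀ p q, MinPolyAux.mm MinPolyAux.XX p q ∈ Submodule.span ℂ S := by
    intro p q
    by_cases h1 : p = q
    · rw [h1, MinPolyAux.mm_self]
      exact Submodule.zero_mem _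
    by_cases h2 : q = (2, 2)
    · rw [h2, MinPolyAux.mm_last]
      exact Submodule.zero_mem _
    by_cases h3 : p = (2, 2)
    · rw [h3, MinPolyAux.mm_swap, MinPolyAux.mm_last, neg_zero]
      exact Submodule.zero_mem _
    apply Submodule.subset_span
    refine ⟨![p, q, (2, 2)], ?_, ?_⟩
    · intro a b hab
      fin_cases a <;> fin_cases b <;> simp_all
    · rw [MinPolyAux.det_eq]
      change _ = (1 : Matrix (Fin 3) (Fin 3) (MvPolynomial (Fin 3 × Fin 3) ℂ)) p.1 p.2 *
        MinPolyAux.mm MinPolyAux.XX q (2, 2) -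
        (1 : Matrix (Fin 3) (Fin 3) (MvPolynomial (Fin 3 × Fin 3) ℂ)) q.1 q.2 *
        MinPolyAux.mm MinPolyAux.XX p (2, 2) +
        (1 : Matrix (Fin 3) (Fin 3) (MvPolynomial (Fin 3 × Fin 3) ℂ)) 2 2 *
        MinPolyAux.mm MinPolyAux.XX p q
      rw [MinPolyAux.mm_last, MinPolyAux.mm_last, Matrix.one_apply_eq]
      ring
  have hspan : Submodule.span ℂ S = Submodule.span ℂ
      (Set.range fun k : Fin 20 => MinPolyAux.mm MinPolyAux.XX (MinPolyAux.pr k).1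
        (MinPolyAux.pr k).2) := by
    apply le_antisymm
    · rw [Submodule.span_le]
      rintro _ ⟨c, _, rfl⟩
      have hd : ∀ i j p q, (1 : Matrix (Fin 3) (Fin 3) (MvPolynomial (Fin 3 × Fin 3) ℂ)) i j *
          MinPolyAux.mm MinPolyAux.XX p q ∈ Submodule.span ℂ
            (Set.range fun k : Fin 20 => MinPolyAux.mm MinPolyAux.XX (MinPolyAux.pr k).1
              (MinPolyAux.pr k).2) := by
        intro i j p q
        by_cases h : i = j
        · rw [h, Matrix.one_apply_eq, one_mul]
          exact MinPolyAux.mm_mem_span p q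
        · rw [Matrix.one_apply_ne h, zero_mul]
          exact Submodule.zero_mem _
      rw [SetLike.mem_coe, MinPolyAux.det_eq]
      exact Submodule.add_mem _ (Submodule.sub_mem _ (hd _ _ _ _) (hd _ _ _ _)) (hd _ _ _ _)
    · rw [Submodule.span_le]
      rintro _ ⟨k, rfl⟩
      exact hmem _ _
  have hhom : ∀ f ∈ Submodule.span ℂ S, f.IsHomogeneous 3 := by
    intro f hf
    rw [hspan] at hf
    have : Submodule.span ℂ (Set.range fun k : Fin 20 => MinPolyAux.mm MinPolyAux.XX
        (MinPolyAux.pr k).1 (MinPolyAux.pr k).2) ≤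
        MvPolynomial.homogeneousSubmodule (Fin 3 × Fin 3) ℂ 3 := by
      rw [Submodule.span_le]
      rintro _ ⟨k, rfl⟩
      exact MinPolyAux.mm_hom _ _
    exact this hf
  have hle : ∀ f ∈ Submodule.span ℂ S, f ∈ Ideal.span S := by
    intro f hf
    exact Submodule.span_subset_span ℂ (MvPolynomial (Fin 3 × Fin 3) ℂ) S hf
  have hi : ∀ f : MvPolynomial (Fin 3 × Fin 3) ℂ, f ∈ Ideal.span S ↔
      ∀ A ∈ {A : Matrix (Fin 3) (Fin 3) ℂ | ¬ LinearIndependent ℂ (fun r : Fin 3 => A ^ (r : ℕ))},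
        MvPolynomial.eval (fun p => A p.1 p.2) f = 0 := by
    intro f
    constructor
    · intro hf A hA
      have : Ideal.span S ≤ RingHom.ker (MvPolynomial.eval
          (fun p : Fin 3 × Fin 3 => A p.1 p.2)) := by
        rw [Ideal.span_le]
        rintro _ ⟨c, _, rfl⟩
        exact MinPolyAux.eval_det_zero A hA c
      exact this hf
    · intro hf
      have h := MinPolyAux.core_V f hf
      refine (Ideal.span_le.mpr ?_ : _ ≤ Ideal.span S) h
      rintro _ ⟨pq, rfl⟩
      exact hle _ (hmem _ _)
  refine ⟨hi, fun f => ⟨fun hf => ⟨hhom f hf, (hi f).mp (hle f hf)⟩, fun hf => ?_⟩, ?_⟩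
  · exact MinPolyAux.hom_mem_span S (fun s hs => hhom s (Submodule.subset_span hs)) f
      ((hi f).mpr hf.2) hf.1
  · rw [hspan, finrank_span_eq_card MinPolyAux.pr_indep]
    simp
end
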